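/- arXiv:1512.08879 — 3 statements merged into one kernel-verified Lean document; each statement's English description precedes it below -/
import Mathlib

section
/- Fix t > 0 with t ≠ 2 and x ∈ ℝ, and let g_n = (c_n x + d_n)^{1/t} for n large enough that c_n x + d_n > 0. Then as n → ∞, 1 − Φ(g_n) = n^{−1} e^{−x} ( 1 − ϑ₁ b_n^{−2} + ϑ₂ b_n^{−4} + O(b_n^{−6}) ), where ϑ₁ = 1 + x + ((2−t)/2) x² and ϑ₂ = 3 + 3x + (3/2) x² + ((2−t)(2t+1)/6) x³ + ((t−2)²/8) x⁴; that is, there exist C > 0 and N such that for all n ≥ N, |n e^{x} (1 − Φ(g_n)) − (1 − ϑ₁ b_n^{−2} + ϑ₂ b_n^{−4})| ≤ C b_n^{−6}. -/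
open Real Filter Topology

/-- The standard normal distribution function. -/
noncomputable def stdNormalCDF (x : ℝ) : ℝ :=
  ∫ u in Set.Iic x, Real.exp (-u ^ 2 / 2) / Real.sqrt (2 * Real.pi)

/-! Write `β = b_n` and `s = β⁻²`. Since `n = √(2π) β exp(β² / 2)`, with `M` the Mills ratio one has
`n eˣ (1 - Φ(g)) = (β / g) · exp(x + (β² - g²) / 2) · (g M(g))`.
As `g = β (1 + t x s) ^ (1 / t)`, the first factor and the exponent of the second are binomial
series in `s`, in which the term `x` of the exponent cancels. Repeated integration by parts expands
`g M(g)` in powers of `g⁻²`, with an error bounded by the first omitted term, and `g⁻²` is again a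
binomial series in `s`. The theorem is the product of the three expansions modulo `s³`.
-/

section PolynomialExpansion

open Asymptotics Polynomial

/-- `HasPolyExpansion l s k f p` is the asymptotic expansion `f = p(s) + O(s ^ k)` along `l` of `f`
in the small parameter `s`. Only the coefficients of `p` below `k` matter when `s → 0`; no
normal form of `p` is imposed, so that expansions multiply and compose like their polynomials. -/
def HasPolyExpansion {ι 𝕜 : Type*} [NormedField 𝕜] (l : Filter ι) (s : ι → 𝕜) (k : ℕ)
    (f : ι → 𝕜) (p : 𝕜[X]) : Prop :=
  (fun i => f i - p.eval (s i)) =O[l] fun i => s i ^ k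

namespace HasPolyExpansion

variable {ι κ 𝕜 : Type*} [NormedField 𝕜] {l : Filter ι} {s f g : ι → 𝕜} {k : ℕ} {p q : 𝕜[X]}

theorem of_eval (l : Filter ι) (s : ι → 𝕜) (k : ℕ) (p : 𝕜[X]) :
    HasPolyExpansion l s k (fun i => p.eval (s i)) p := by
  simpa [HasPolyExpansion] using isBigO_zero _ _

theorem congr' (hf : HasPolyExpansion l s k f p) (hfg : f =ᶠ[l] g) :
    HasPolyExpansion l s k g p :=
  IsBigO.congr' hf (hfg.sub EventuallyEq.rfl) EventuallyEq.rfl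

theorem comp_tendsto {l' : Filter κ} {u : κ → ι} (hf : HasPolyExpansion l s k f p)
    (hu : Tendsto u l' l) : HasPolyExpansion l' (s ∘ u) k (f ∘ u) p :=
  IsBigO.comp_tendsto hf hu

theorem add (hf : HasPolyExpansion l s k f p) (hg : HasPolyExpansion l s k g q) :
    HasPolyExpansion l s k (fun i => f i + g i) (p + q) :=
  (IsBigO.add hf hg).congr_left fun i => by rw [eval_add]; ring

theorem const_mul (c : 𝕜) (hf : HasPolyExpansion l s k f p) :
    HasPolyExpansion l s k (fun i => c * f i) (C c * p) :=
  (IsBigO.const_mul_left hf c).congr_left fun i => by rw [eval_C_mul]; ring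

theorem div_scale (hf : HasPolyExpansion l s (k + 1) f (X * p)) (hs : ∀ᶠ i in l, s i ≠ 0) :
    HasPolyExpansion l s k (fun i => f i / s i) p := by
  refine (IsBigO.mul hf (isBigO_refl (fun i => (s i)⁻¹) l)).congr' ?_ ?_
  · filter_upwards [hs] with i hi
    rw [eval_mul, eval_X]
    field_simp
  · filter_upwards [hs] with i hi
    rw [pow_succ, mul_inv_cancel_right₀ hi]

theorem eval_isBigO_one (hs : Tendsto s l (𝓝 0)) (p : 𝕜[X]) :
    (fun i => p.eval (s i)) =O[l] fun _ => (1 : 𝕜) :=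
  ((p.continuous.tendsto 0).comp hs).isBigO_one 𝕜

theorem isBigO_one (hs : Tendsto s l (𝓝 0)) (hf : HasPolyExpansion l s k f p) :
    f =O[l] fun _ => (1 : 𝕜) :=
  ((IsBigO.trans hf ((hs.pow k).isBigO_one 𝕜)).add (eval_isBigO_one hs p)).congr_left
    fun _ => sub_add_cancel _ _

theorem eval_isBigO_pow (hs : Tendsto s l (𝓝 0)) (h : X ^ k ∣ p) :
    (fun i => p.eval (s i)) =O[l] fun i => s i ^ k := by
  obtain ⟨r, rfl⟩ := h
  simpa using (isBigO_refl (fun i => s i ^ k) l).mul (eval_isBigO_one hs r)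

theorem isBigO_scale (hs : Tendsto s l (𝓝 0)) (hk : k ≠ 0) (hf : HasPolyExpansion l s k f p)
    (hp : p.coeff 0 = 0) : f =O[l] s := by
  have hpow : (fun i => s i ^ k) =O[l] s := by
    simpa using eval_isBigO_pow (k := 1) hs (pow_dvd_pow X (Nat.one_le_iff_ne_zero.2 hk))
  have heval : (fun i => p.eval (s i)) =O[l] s := by
    simpa using eval_isBigO_pow (k := 1) hs (by simpa using X_dvd_iff.2 hp)
  exact ((IsBigO.trans hf hpow).add heval).congr_left fun _ => sub_add_cancel _ _

theorem congr_coeff (hs : Tendsto s l (𝓝 0)) (hf : HasPolyExpansion l s k f p)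
    (hpq : ∀ i < k, p.coeff i = q.coeff i) : HasPolyExpansion l s k f q := by
  have hdvd : X ^ k ∣ p - q :=
    X_pow_dvd_iff.2 fun i hi => by rw [coeff_sub, hpq i hi, sub_self]
  exact (IsBigO.add hf (eval_isBigO_pow hs hdvd)).congr_left fun i => by rw [eval_sub]; ring

theorem mul (hs : Tendsto s l (𝓝 0)) (hf : HasPolyExpansion l s k f p)
    (hg : HasPolyExpansion l s k g q) :
    HasPolyExpansion l s k (fun i => f i * g i) (p * q) := by
  have hfg : (fun i => (f i - p.eval (s i)) * g i) =O[l] fun i => s i ^ k := by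
    simpa only [mul_one] using IsBigO.mul hf (hg.isBigO_one hs)
  have hpg : (fun i => p.eval (s i) * (g i - q.eval (s i))) =O[l] fun i => s i ^ k := by
    simpa only [one_mul] using (eval_isBigO_one hs p).mul hg
  exact (hfg.add hpg).congr_left fun i => by rw [eval_mul]; ring

theorem comp {𝕜 : Type*} [NontriviallyNormedField 𝕜] {s f u : ι → 𝕜} {p q : 𝕜[X]}
    (hs : Tendsto s l (𝓝 0)) (hk : k ≠ 0) (hf : HasPolyExpansion l u k f q)
    (hu : HasPolyExpansion l s k u p) (hp : p.coeff 0 = 0) :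
    HasPolyExpansion l s k f (q.comp p) := by
  have hus : u =O[l] s := hu.isBigO_scale hs hk hp
  have heval : Tendsto (fun i => p.eval (s i)) l (𝓝 0) :=
    ((of_eval l s k p).isBigO_scale hs hk hp).trans_tendsto hs
  have hlip : (fun i => q.eval (u i) - q.eval (p.eval (s i))) =O[l]
      fun i => u i - p.eval (s i) :=
    (q.hasStrictDerivAt 0).hasStrictFDerivAt.isBigO_sub.comp_tendsto
      ((hus.trans_tendsto hs).prodMk_nhds heval)
  exact ((IsBigO.trans hf (hus.pow k)).add (hlip.trans hu)).congr_left
    fun i => by rw [eval_comp]; ring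

theorem exp {s : ι → ℝ} (hs : Tendsto s l (𝓝 0)) (k : ℕ) :
    HasPolyExpansion l s k (fun i => Real.exp (s i))
      (∑ j ∈ Finset.range k, C (1 / (j.factorial : ℝ)) * X ^ j) := by
  refine ((Real.exp_sub_sum_range_isBigO_pow k).comp_tendsto hs).congr_left fun i => ?_
  simp [eval_finsetSum, div_eq_inv_mul]

theorem one_add_const_mul_rpow {s : ι → ℝ} (hs : Tendsto s l (𝓝 0)) (k : ℕ) (c a : ℝ) :
    HasPolyExpansion l s k (fun i => (1 + c * s i) ^ a)
      (∑ j ∈ Finset.range k, C (Ring.choose a j * c ^ j) * X ^ j) := by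
  have hcs : Tendsto (fun i => c * s i) l (𝓝 0) := by simpa using hs.const_mul c
  have hbinom := (Real.one_add_rpow_hasFPowerSeriesAt_zero (a := a)).isBigO_sub_partialSum_pow k
  have hpow : (fun i => ‖c * s i‖ ^ k) =O[l] fun i => s i ^ k := by
    simpa [mul_pow] using ((isBigO_refl (fun i => s i ^ k) l).const_mul_left (c ^ k)).norm_left
  refine ((hbinom.comp_tendsto hcs).trans hpow).congr_left fun i => ?_
  simp [FormalMultilinearSeries.partialSum, eval_finsetSum, binomialSeries, mul_pow,
    mul_assoc, mul_comm, mul_left_comm]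

theorem one_add_const_mul_rpow_sub_one_div {s : ι → ℝ} (hs : Tendsto s l (𝓝 0))
    (hs0 : ∀ᶠ i in l, s i ≠ 0) (k : ℕ) (c a : ℝ) :
    HasPolyExpansion l s k (fun i => ((1 + c * s i) ^ a - 1) / s i)
      (∑ j ∈ Finset.range k, C (Ring.choose a (j + 1) * c ^ (j + 1)) * X ^ j) := by
  refine div_scale ?_ hs0
  convert (one_add_const_mul_rpow hs (k + 1) c a).add (of_eval l s (k + 1) (C (-1))) using 1
  · simp [sub_eq_add_neg]
  · rw [Finset.sum_range_succ', Finset.mul_sum]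
    simp [pow_succ', mul_left_comm]

end HasPolyExpansion

theorem ringChoose_eq_prod_div_factorial (a : ℝ) (n : ℕ) :
    Ring.choose a n = (∏ j ∈ Finset.range n, (a - j)) / n.factorial := by
  rw [Ring.choose_eq_smul, ← aeval_eq_smeval, ← eval_map_algebraMap, descPochhammer_map,
    descPochhammer_eval_eq_prod_range, smul_eq_mul, inv_mul_eq_div]

section Quadratic

/-- The quadratic polynomial `a + b X + c X ^ 2`, the normal form in which third-order
expansions are multiplied and composed explicitly. -/
noncomputable def quadratic {𝕜 : Type*} [Semiring 𝕜] (a b c : 𝕜) : 𝕜[X] :=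
  C a + C b * X + C c * X ^ 2

theorem eval_quadratic {𝕜 : Type*} [CommSemiring 𝕜] (a b c y : 𝕜) :
    (quadratic a b c).eval y = a + b * y + c * y ^ 2 := by
  simp [quadratic]

theorem quadratic_add_quadratic {𝕜 : Type*} [Semiring 𝕜] (a b c a' b' c' : 𝕜) :
    quadratic a b c + quadratic a' b' c' = quadratic (a + a') (b + b') (c + c') := by
  simp only [quadratic, C_add, add_mul]
  abel

theorem C_mul_quadratic {𝕜 : Type*} [Semiring 𝕜] (r a b c : 𝕜) :
    C r * quadratic a b c = quadratic (r * a) (r * b) (r * c) := by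
  simp only [quadratic, C_mul, mul_add, mul_assoc]

theorem sum_range_three_C_mul_X_pow {𝕜 : Type*} [Semiring 𝕜] (a : ℕ → 𝕜) :
    ∑ j ∈ Finset.range 3, C (a j) * X ^ j = quadratic (a 0) (a 1) (a 2) := by
  simp [Finset.sum_range_succ, quadratic]

namespace HasPolyExpansion

variable {ι : Type*} {l : Filter ι}

theorem congr_quadratic {𝕜 : Type*} [NormedField 𝕜] {s f : ι → 𝕜} {a b c a' b' c' : 𝕜}
    (hf : HasPolyExpansion l s 3 f (quadratic a b c)) (ha : a = a') (hb : b = b') (hc : c = c') :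
    HasPolyExpansion l s 3 f (quadratic a' b' c') := by
  rwa [← ha, ← hb, ← hc]

theorem mul_quadratic {𝕜 : Type*} [NormedField 𝕜] {s f g : ι → 𝕜} {a b c a' b' c' : 𝕜}
    (hs : Tendsto s l (𝓝 0)) (hf : HasPolyExpansion l s 3 f (quadratic a b c))
    (hg : HasPolyExpansion l s 3 g (quadratic a' b' c')) :
    HasPolyExpansion l s 3 (fun i => f i * g i)
      (quadratic (a * a') (a * b' + b * a') (a * c' + b * b' + c * a')) := by
  refine (hf.mul hs hg).congr_coeff hs fun i hi => ?_
  interval_cases i <;>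
    simp [quadratic, coeff_mul, Finset.Nat.antidiagonal_succ, coeff_X, coeff_C, add_assoc]

theorem comp_quadratic {𝕜 : Type*} [NontriviallyNormedField 𝕜] {s f u : ι → 𝕜}
    {a b c b' c' : 𝕜} (hs : Tendsto s l (𝓝 0)) (hf : HasPolyExpansion l u 3 f (quadratic a b c))
    (hu : HasPolyExpansion l s 3 u (quadratic 0 b' c')) :
    HasPolyExpansion l s 3 f (quadratic a (b * b') (b * c' + c * b' ^ 2)) := by
  refine (hf.comp hs three_ne_zero hu (by simp [quadratic])).congr_coeff hs fun i hi => ?_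
  interval_cases i <;>
    simp [quadratic, coeff_mul, Finset.Nat.antidiagonal_succ, coeff_X, coeff_C, pow_two]

theorem exp_quadratic {s f : ι → ℝ} {b c : ℝ} (hs : Tendsto s l (𝓝 0))
    (hf : HasPolyExpansion l s 3 f (quadratic 0 b c)) :
    HasPolyExpansion l s 3 (fun i => Real.exp (f i)) (quadratic 1 b (c + b ^ 2 / 2)) := by
  have hf0 : Tendsto f l (𝓝 0) :=
    (hf.isBigO_scale hs three_ne_zero (by simp [quadratic])).trans_tendsto hs
  have hexp := HasPolyExpansion.exp hf0 3
  rw [sum_range_three_C_mul_X_pow] at hexp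
  refine (comp_quadratic hs hexp hf).congr_quadratic ?_ ?_ ?_
  · simp
  · simp
  · simp only [Nat.factorial_one, Nat.factorial_two]
    push_cast
    ring

theorem one_add_const_mul_rpow_quadratic {s : ι → ℝ} (hs : Tendsto s l (𝓝 0)) (c a : ℝ) :
    HasPolyExpansion l s 3 (fun i => (1 + c * s i) ^ a)
      (quadratic 1 (a * c) (a * (a - 1) / 2 * c ^ 2)) := by
  have hrpow := one_add_const_mul_rpow hs 3 c a
  rw [sum_range_three_C_mul_X_pow] at hrpow
  refine hrpow.congr_quadratic ?_ ?_ ?_ <;>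
    simp [ringChoose_eq_prod_div_factorial, Finset.prod_range_succ]

theorem one_add_const_mul_rpow_sub_one_div_quadratic {s : ι → ℝ} (hs : Tendsto s l (𝓝 0))
    (hs0 : ∀ᶠ i in l, s i ≠ 0) (c a : ℝ) :
    HasPolyExpansion l s 3 (fun i => ((1 + c * s i) ^ a - 1) / s i)
      (quadratic (a * c) (a * (a - 1) / 2 * c ^ 2) (a * (a - 1) * (a - 2) / 6 * c ^ 3)) := by
  have hdiv := one_add_const_mul_rpow_sub_one_div hs hs0 3 c a
  rw [sum_range_three_C_mul_X_pow] at hdiv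
  refine hdiv.congr_quadratic ?_ ?_ ?_ <;>
    simp [ringChoose_eq_prod_div_factorial, Finset.prod_range_succ, Nat.factorial]

end HasPolyExpansion

end Quadratic

end PolynomialExpansion

section MillsRatio

open MeasureTheory Set
open scoped Nat

theorem hasDerivAt_exp_neg_sq_div_two (u : ℝ) :
    HasDerivAt (fun u : ℝ => exp (-u ^ 2 / 2)) (-u * exp (-u ^ 2 / 2)) u := by
  have hexponent : HasDerivAt (fun u : ℝ => -u ^ 2 / 2) (-u) u :=
    ((hasDerivAt_pow 2 u).neg.div_const 2).congr_deriv (by push_cast; ring)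
  exact hexponent.exp.congr_deriv (mul_comm _ _)

theorem tendsto_exp_neg_sq_div_two_atTop :
    Tendsto (fun u : ℝ => exp (-u ^ 2 / 2)) atTop (𝓝 0) := by
  refine tendsto_exp_atBot.comp ?_
  simp only [neg_div]
  exact tendsto_neg_atTop_atBot.comp
    ((tendsto_pow_atTop two_ne_zero).atTop_div_const two_pos)

theorem integrable_exp_neg_sq_div_two : Integrable fun u : ℝ => exp (-u ^ 2 / 2) :=
  (integrable_exp_neg_mul_sq one_half_pos).congr
    (Eventually.of_forall fun u => by ring_nf)

theorem integral_exp_neg_sq_div_two : ∫ u : ℝ, exp (-u ^ 2 / 2) = √(2 * π) := by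
  calc ∫ u : ℝ, exp (-u ^ 2 / 2) = ∫ u : ℝ, exp (-(1 / 2) * u ^ 2) := by
        congr with u; ring_nf
    _ = √(2 * π) := by rw [integral_gaussian]; ring_nf

theorem one_sub_stdNormalCDF (y : ℝ) :
    1 - stdNormalCDF y = (∫ u in Ioi y, exp (-u ^ 2 / 2)) / √(2 * π) := by
  have hsplit := integral_add_compl (measurableSet_Iic (a := y)) integrable_exp_neg_sq_div_two
  rw [compl_Iic, integral_exp_neg_sq_div_two] at hsplit
  rw [stdNormalCDF, integral_div, eq_div_iff (by positivity), sub_mul,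
    div_mul_cancel₀ _ (by positivity)]
  linarith

section TailMoment

variable {y : ℝ}

theorem integrableOn_exp_neg_sq_div_two_div_pow (hy : 0 < y) (m : ℕ) :
    IntegrableOn (fun u : ℝ => exp (-u ^ 2 / 2) / u ^ m) (Ioi y) := by
  refine (integrable_exp_neg_sq_div_two.div_const (y ^ m)).integrableOn.mono'
    (by fun_prop : Measurable _).aestronglyMeasurable ?_
  filter_upwards [ae_restrict_mem measurableSet_Ioi] with u (hu : y < u)
  have hu0 : 0 < u := hy.trans hu
  rw [norm_of_nonneg (by positivity)]
  gcongr

/-- Integration by parts, writing the integrand as `(u * exp (-u ^ 2 / 2)) / u ^ (m + 1)`. -/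
theorem integral_Ioi_exp_neg_sq_div_two_div_pow (hy : 0 < y) (m : ℕ) :
    ∫ u in Ioi y, exp (-u ^ 2 / 2) / u ^ m =
      exp (-y ^ 2 / 2) / y ^ (m + 1) -
        (m + 1) * ∫ u in Ioi y, exp (-u ^ 2 / 2) / u ^ (m + 2) := by
  have hderiv : ∀ u ∈ Ici y, HasDerivAt (fun u : ℝ => -(exp (-u ^ 2 / 2) / u ^ (m + 1)))
      (exp (-u ^ 2 / 2) / u ^ m + (m + 1) * (exp (-u ^ 2 / 2) / u ^ (m + 2))) u := by
    intro u hu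
    have hu0 : u ≠ 0 := (hy.trans_le hu).ne'
    refine ((hasDerivAt_exp_neg_sq_div_two u).div (hasDerivAt_pow (m + 1) u)
      (pow_ne_zero _ hu0)).neg.congr_deriv ?_
    push_cast
    field_simp
    ring
  have htendsto : Tendsto (fun u : ℝ => -(exp (-u ^ 2 / 2) / u ^ (m + 1))) atTop (𝓝 0) := by
    simpa using (tendsto_exp_neg_sq_div_two_atTop.div_atTop
      (tendsto_pow_atTop (Nat.succ_ne_zero m))).neg
  have hint := integrableOn_exp_neg_sq_div_two_div_pow hy
  have hftc := integral_Ioi_of_hasDerivAt_of_tendsto' hderiv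
    ((hint m).add ((hint (m + 2)).const_mul _)) htendsto
  rw [integral_add (hint m) ((hint (m + 2)).const_mul _), integral_const_mul] at hftc
  linarith

theorem integral_Ioi_exp_neg_sq_div_two_div_pow_nonneg (hy : 0 < y) (m : ℕ) :
    0 ≤ ∫ u in Ioi y, exp (-u ^ 2 / 2) / u ^ m := by
  refine setIntegral_nonneg measurableSet_Ioi fun u hu => ?_
  have hu0 : 0 < u := hy.trans hu
  positivity

theorem integral_Ioi_exp_neg_sq_div_two_div_pow_le (hy : 0 < y) (m : ℕ) :
    ∫ u in Ioi y, exp (-u ^ 2 / 2) / u ^ m ≤ exp (-y ^ 2 / 2) / y ^ (m + 1) := by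
  rw [integral_Ioi_exp_neg_sq_div_two_div_pow hy]
  exact sub_le_self _
    (mul_nonneg (by positivity) (integral_Ioi_exp_neg_sq_div_two_div_pow_nonneg hy _))

theorem doubleFactorial_two_mul_succ_sub_one (k : ℕ) :
    (2 * (k + 1) - 1)‼ = (2 * k + 1) * (2 * k - 1)‼ := by
  cases k with
  | zero => rfl
  | succ k => exact Nat.doubleFactorial_add_two (2 * k + 1)

/-- For `j = 0` the truncated `2 * j - 1` is `0`, and `0‼ = 1` is the conventional `(-1)‼`. -/
theorem integral_Ioi_exp_neg_sq_div_two (hy : 0 < y) (k : ℕ) :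
    ∫ u in Ioi y, exp (-u ^ 2 / 2) =
      exp (-y ^ 2 / 2) * ∑ j ∈ Finset.range k, (-1) ^ j * ((2 * j - 1)‼ : ℝ) / y ^ (2 * j + 1) +
        (-1) ^ k * (2 * k - 1)‼ * ∫ u in Ioi y, exp (-u ^ 2 / 2) / u ^ (2 * k) := by
  induction k with
  | zero => simp
  | succ k ih =>
    rw [ih, integral_Ioi_exp_neg_sq_div_two_div_pow hy, Finset.sum_range_succ, mul_add,
      doubleFactorial_two_mul_succ_sub_one, add_assoc]
    congr 1
    push_cast
    ring_nf

end TailMoment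

/-- The Mills ratio `(1 - Φ(y)) / φ(y)` of the standard normal law, where
`φ(y) = exp (-y ^ 2 / 2) / √(2 * π)`. -/
noncomputable def millsRatio (y : ℝ) : ℝ :=
  √(2 * π) * exp (y ^ 2 / 2) * (1 - stdNormalCDF y)

theorem millsRatio_eq_integral (y : ℝ) :
    millsRatio y = exp (y ^ 2 / 2) * ∫ u in Ioi y, exp (-u ^ 2 / 2) := by
  rw [millsRatio, one_sub_stdNormalCDF]
  field_simp

theorem abs_mul_millsRatio_sub_sum_le {y : ℝ} (hy : 0 < y) (k : ℕ) :
    |y * millsRatio y - ∑ j ∈ Finset.range k, (-1) ^ j * ((2 * j - 1)‼ : ℝ) * (y ^ 2)⁻¹ ^ j| ≤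
      (2 * k - 1)‼ * (y ^ 2)⁻¹ ^ k := by
  set R := ∫ u in Ioi y, exp (-u ^ 2 / 2) / u ^ (2 * k)
  have hexp : exp (y ^ 2 / 2) * exp (-y ^ 2 / 2) = 1 := by
    rw [← exp_add, ← exp_zero]
    ring_nf
  have hremainder : y * millsRatio y -
      ∑ j ∈ Finset.range k, (-1) ^ j * ((2 * j - 1)‼ : ℝ) * (y ^ 2)⁻¹ ^ j =
      (-1) ^ k * ((2 * k - 1)‼ * (y * exp (y ^ 2 / 2) * R)) := by
    have hsum : y * ∑ j ∈ Finset.range k, (-1) ^ j * ((2 * j - 1)‼ : ℝ) / y ^ (2 * j + 1) =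
        ∑ j ∈ Finset.range k, (-1) ^ j * ((2 * j - 1)‼ : ℝ) * (y ^ 2)⁻¹ ^ j := by
      rw [Finset.mul_sum]
      refine Finset.sum_congr rfl fun j _ => ?_
      rw [inv_pow, ← pow_mul, pow_succ]
      field_simp
    rw [millsRatio_eq_integral, integral_Ioi_exp_neg_sq_div_two hy k, ← hsum]
    linear_combination (y * ∑ j ∈ Finset.range k,
      (-1) ^ j * ((2 * j - 1)‼ : ℝ) / y ^ (2 * j + 1)) * hexp
  have hR : 0 ≤ R := integral_Ioi_exp_neg_sq_div_two_div_pow_nonneg hy _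
  rw [hremainder, abs_mul, abs_neg_one_pow, one_mul, abs_of_nonneg (by positivity)]
  gcongr
  calc y * exp (y ^ 2 / 2) * R
      ≤ y * exp (y ^ 2 / 2) * (exp (-y ^ 2 / 2) / y ^ (2 * k + 1)) := by
        gcongr
        exact integral_Ioi_exp_neg_sq_div_two_div_pow_le hy _
    _ = exp (y ^ 2 / 2) * exp (-y ^ 2 / 2) * (y ^ 2)⁻¹ ^ k := by
        rw [inv_pow, ← pow_mul]
        field_simp
        ring
    _ = (y ^ 2)⁻¹ ^ k := by rw [hexp, one_mul]

open Polynomial in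
theorem hasPolyExpansion_mul_millsRatio (k : ℕ) :
    HasPolyExpansion atTop (fun y : ℝ => (y ^ 2)⁻¹) k (fun y => y * millsRatio y)
      (∑ j ∈ Finset.range k, C ((-1) ^ j * ((2 * j - 1)‼ : ℝ)) * X ^ j) := by
  refine Asymptotics.IsBigO.of_bound (2 * k - 1)‼ ?_
  filter_upwards [eventually_gt_atTop 0] with y hy
  have hmills := abs_mul_millsRatio_sub_sum_le hy k
  simpa [eval_finsetSum] using hmills

end MillsRatio

section PoweredTail

variable {t x β : ℝ}

theorem tendsto_inv_sq_atTop : Tendsto (fun β : ℝ => (β ^ 2)⁻¹) atTop (𝓝 0) :=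
  (tendsto_pow_atTop two_ne_zero).inv_tendsto_atTop

theorem tendsto_one_add_const_mul_inv_sq (c : ℝ) :
    Tendsto (fun β : ℝ => 1 + c * (β ^ 2)⁻¹) atTop (𝓝 1) := by
  simpa using (tendsto_inv_sq_atTop.const_mul c).const_add 1

theorem mul_rpow_sub_two_mul_add_rpow (t x : ℝ) (hβ : 0 < β) :
    t * β ^ (t - 2) * x + β ^ t = β ^ t * (1 + t * x * (β ^ 2)⁻¹) := by
  rw [rpow_sub hβ, rpow_two]
  field_simp
  ring

/-- The level `g = (c x + d) ^ (1 / t)`, where `c = t β ^ (t - 2)` and `d = β ^ t` are the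
norming constants of the `t`-th power, as a function of `β = b_n`. -/
noncomputable def poweredLevel (t x β : ℝ) : ℝ :=
  (t * β ^ (t - 2) * x + β ^ t) ^ (1 / t)

theorem poweredLevel_eq (ht : t ≠ 0) (hβ : 0 < β) (hw : 0 ≤ 1 + t * x * (β ^ 2)⁻¹) :
    poweredLevel t x β = β * (1 + t * x * (β ^ 2)⁻¹) ^ (1 / t) := by
  rw [poweredLevel, mul_rpow_sub_two_mul_add_rpow t x hβ, mul_rpow (by positivity) hw,
    ← rpow_mul hβ.le, mul_one_div_cancel ht, rpow_one]

theorem sq_poweredLevel (ht : t ≠ 0) (hβ : 0 < β) (hw : 0 ≤ 1 + t * x * (β ^ 2)⁻¹) :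
    poweredLevel t x β ^ 2 = β ^ 2 * (1 + t * x * (β ^ 2)⁻¹) ^ (2 / t) := by
  rw [poweredLevel_eq ht hβ hw, mul_pow, ← rpow_mul_natCast hw]
  ring_nf

theorem eventually_pos_and_one_add_pos (t x : ℝ) :
    ∀ᶠ β : ℝ in atTop, 0 < β ∧ 0 < 1 + t * x * (β ^ 2)⁻¹ :=
  (eventually_gt_atTop 0).and
    ((tendsto_one_add_const_mul_inv_sq (t * x)).eventually_const_lt one_pos)

theorem tendsto_poweredLevel_atTop (ht : t ≠ 0) (x : ℝ) :
    Tendsto (poweredLevel t x) atTop atTop := by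
  have hratio : Tendsto (fun β : ℝ => (1 + t * x * (β ^ 2)⁻¹) ^ (1 / t)) atTop (𝓝 1) := by
    simpa using (tendsto_one_add_const_mul_inv_sq (t * x)).rpow_const (p := 1 / t)
      (Or.inl one_ne_zero)
  refine (tendsto_id.atTop_mul_pos one_pos hratio).congr' ?_
  filter_upwards [eventually_pos_and_one_add_pos t x] with β ⟨hβ, hw⟩
  exact (poweredLevel_eq ht hβ hw.le).symm

theorem hasPolyExpansion_div_poweredLevel (ht : t ≠ 0) (x : ℝ) :
    HasPolyExpansion atTop (fun β : ℝ => (β ^ 2)⁻¹) 3 (fun β => β / poweredLevel t x β)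
      (quadratic 1 (-x) ((1 + t) / 2 * x ^ 2)) := by
  have hrpow := HasPolyExpansion.one_add_const_mul_rpow_quadratic tendsto_inv_sq_atTop
    (t * x) (-1 / t)
  refine (hrpow.congr_quadratic rfl ?_ ?_).congr' ?_
  · field_simp
  · field_simp
    ring
  · filter_upwards [eventually_pos_and_one_add_pos t x] with β ⟨hβ, hw⟩
    rw [poweredLevel_eq ht hβ hw.le, neg_div, rpow_neg hw.le]
    field_simp

theorem hasPolyExpansion_inv_sq_poweredLevel (ht : t ≠ 0) (x : ℝ) :
    HasPolyExpansion atTop (fun β : ℝ => (β ^ 2)⁻¹) 3 (fun β => (poweredLevel t x β ^ 2)⁻¹)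
      (quadratic 0 1 (-2 * x)) := by
  have hrpow := HasPolyExpansion.one_add_const_mul_rpow_quadratic tendsto_inv_sq_atTop
    (t * x) (-2 / t)
  have hmul := (HasPolyExpansion.of_eval atTop (fun β : ℝ => (β ^ 2)⁻¹) 3
    (quadratic 0 1 0)).mul_quadratic tendsto_inv_sq_atTop hrpow
  refine (hmul.congr_quadratic ?_ ?_ ?_).congr' ?_
  · ring
  · ring
  · field_simp
    ring
  · filter_upwards [eventually_pos_and_one_add_pos t x] with β ⟨hβ, hw⟩
    rw [sq_poweredLevel ht hβ hw.le, neg_div, rpow_neg hw.le, mul_inv, eval_quadratic]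
    ring

theorem hasPolyExpansion_poweredLevel_mul_millsRatio (ht : t ≠ 0) (x : ℝ) :
    HasPolyExpansion atTop (fun β : ℝ => (β ^ 2)⁻¹) 3
      (fun β => poweredLevel t x β * millsRatio (poweredLevel t x β))
      (quadratic 1 (-1) (2 * x + 3)) := by
  have hmills := (hasPolyExpansion_mul_millsRatio 3).comp_tendsto
    (tendsto_poweredLevel_atTop ht x)
  rw [sum_range_three_C_mul_X_pow] at hmills
  refine (hmills.comp_quadratic tendsto_inv_sq_atTop
    (hasPolyExpansion_inv_sq_poweredLevel ht x)).congr_quadratic ?_ ?_ ?_ <;>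
    norm_num [Nat.doubleFactorial]

theorem hasPolyExpansion_add_sq_sub_sq_poweredLevel_div_two (ht : t ≠ 0) (x : ℝ) :
    HasPolyExpansion atTop (fun β : ℝ => (β ^ 2)⁻¹) 3
      (fun β => x + (β ^ 2 - poweredLevel t x β ^ 2) / 2)
      (quadratic 0 ((t - 2) / 2 * x ^ 2) ((t - 2) * (1 - t) / 3 * x ^ 3)) := by
  have hne : ∀ᶠ β : ℝ in atTop, (β ^ 2)⁻¹ ≠ 0 := by
    filter_upwards [eventually_gt_atTop 0] with β hβ
    positivity
  have hdiv := HasPolyExpansion.one_add_const_mul_rpow_sub_one_div_quadratic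
    tendsto_inv_sq_atTop hne (t * x) (2 / t)
  have hexponent := (HasPolyExpansion.of_eval atTop (fun β : ℝ => (β ^ 2)⁻¹) 3
    (quadratic x 0 0)).add (hdiv.const_mul (-1 / 2))
  rw [C_mul_quadratic, quadratic_add_quadratic] at hexponent
  refine (hexponent.congr_quadratic ?_ ?_ ?_).congr' ?_
  · field_simp
    ring
  · field_simp
    ring
  · field_simp
    ring
  · filter_upwards [eventually_pos_and_one_add_pos t x] with β ⟨hβ, hw⟩
    rw [sq_poweredLevel ht hβ hw.le]
    simp only [eval_quadratic]
    field_simp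
    ring

theorem sqrt_two_pi_mul_one_sub_stdNormalCDF {g : ℝ} (hg : g ≠ 0) (x β : ℝ) :
    √(2 * π) * β * exp (β ^ 2 / 2) * exp x * (1 - stdNormalCDF g) =
      β / g * exp (x + (β ^ 2 - g ^ 2) / 2) * (g * millsRatio g) := by
  have hexp : exp (x + (β ^ 2 - g ^ 2) / 2) * exp (g ^ 2 / 2) = exp (β ^ 2 / 2) * exp x := by
    rw [← exp_add, ← exp_add]
    ring_nf
  calc √(2 * π) * β * exp (β ^ 2 / 2) * exp x * (1 - stdNormalCDF g)
      = β * (exp (x + (β ^ 2 - g ^ 2) / 2) * millsRatio g) := by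
        rw [millsRatio]
        linear_combination -(1 - stdNormalCDF g) * β * √(2 * π) * hexp
    _ = β / g * exp (x + (β ^ 2 - g ^ 2) / 2) * (g * millsRatio g) := by
        rw [mul_mul_mul_comm, div_mul_cancel₀ _ hg]

theorem hasPolyExpansion_one_sub_stdNormalCDF_poweredLevel (ht : t ≠ 0) (x : ℝ) :
    HasPolyExpansion atTop (fun β : ℝ => (β ^ 2)⁻¹) 3
      (fun β => √(2 * π) * β * exp (β ^ 2 / 2) * exp x * (1 - stdNormalCDF (poweredLevel t x β)))
      (quadratic 1 (-(1 + x + (2 - t) / 2 * x ^ 2))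
        (3 + 3 * x + 3 / 2 * x ^ 2 + (2 - t) * (2 * t + 1) / 6 * x ^ 3 +
          (t - 2) ^ 2 / 8 * x ^ 4)) := by
  have hexp := (hasPolyExpansion_add_sq_sub_sq_poweredLevel_div_two ht x).exp_quadratic
    tendsto_inv_sq_atTop
  have hprod := ((hasPolyExpansion_div_poweredLevel ht x).mul_quadratic tendsto_inv_sq_atTop
    hexp).mul_quadratic tendsto_inv_sq_atTop
    (hasPolyExpansion_poweredLevel_mul_millsRatio ht x)
  refine (hprod.congr_quadratic ?_ ?_ ?_).congr' ?_
  · ring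
  · ring
  · ring
  · filter_upwards [(tendsto_poweredLevel_atTop ht x).eventually_ne_atTop 0] with β hg
    exact (sqrt_two_pi_mul_one_sub_stdNormalCDF hg x β).symm

end PoweredTail

section NormingSequence

theorem tendsto_atTop_of_two_pi_mul_sq_mul_exp_sq {b : ℕ → ℝ}
    (hb : ∀ n : ℕ, 1 ≤ n → 0 < b n ∧ 2 * π * b n ^ 2 * exp (b n ^ 2) = (n : ℝ) ^ 2) :
    Tendsto b atTop atTop := by
  have hsq : Tendsto (fun n : ℕ => (n : ℝ) ^ 2) atTop atTop :=
    (tendsto_pow_atTop two_ne_zero).comp tendsto_natCast_atTop_atTop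
  refine tendsto_atTop.2 fun B => ?_
  filter_upwards [hsq.eventually_gt_atTop (2 * π * B ^ 2 * exp (B ^ 2)),
    eventually_ge_atTop 1] with n hn hn1
  obtain ⟨hpos, heq⟩ := hb n hn1
  contrapose! hn with hlt
  calc (n : ℝ) ^ 2 = 2 * π * b n ^ 2 * exp (b n ^ 2) := heq.symm
    _ ≤ 2 * π * B ^ 2 * exp (B ^ 2) := by gcongr

theorem eq_sqrt_two_pi_mul_mul_exp {a β : ℝ} (ha : 0 ≤ a) (hβ : 0 ≤ β)
    (h : 2 * π * β ^ 2 * exp (β ^ 2) = a ^ 2) : a = √(2 * π) * β * exp (β ^ 2 / 2) := by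
  rw [← sq_eq_sq₀ ha (by positivity), ← h, mul_pow, mul_pow, sq_sqrt (by positivity),
    ← exp_nat_mul]
  congr 2
  push_cast
  ring

end NormingSequence

theorem powered_extremes_tail_expansion_general
    (b : ℕ → ℝ)
    (hb : ∀ n : ℕ, 1 ≤ n → 0 < b n ∧
      2 * Real.pi * (b n) ^ 2 * Real.exp ((b n) ^ 2) = (n : ℝ) ^ 2)
    (t : ℝ) (ht : t ≠ 0) (x : ℝ)
    (c d g : ℕ → ℝ)
    (hc : ∀ n : ℕ, c n = t * b n ^ (t - 2))
    (hd : ∀ n : ℕ, d n = b n ^ t)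
    (hg : ∀ n : ℕ, g n = (c n * x + d n) ^ (1 / t)) :
    ∃ C > (0 : ℝ), ∃ N : ℕ, ∀ n : ℕ, N ≤ n →
      0 < c n * x + d n ∧
      |(n : ℝ) * Real.exp x * (1 - stdNormalCDF (g n)) -
        (1 - (1 + x + (2 - t) / 2 * x ^ 2) / (b n) ^ 2 +
          (3 + 3 * x + 3 / 2 * x ^ 2 + (2 - t) * (2 * t + 1) / 6 * x ^ 3 +
            (t - 2) ^ 2 / 8 * x ^ 4) / (b n) ^ 4)|
      ≤ C / (b n) ^ 6 := by
  have hbtop := tendsto_atTop_of_two_pi_mul_sq_mul_exp_sq hb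
  obtain ⟨C, hC, hbound⟩ := ((hasPolyExpansion_one_sub_stdNormalCDF_poweredLevel ht x).comp_tendsto
    hbtop).exists_pos
  refine ⟨C, hC, eventually_atTop.1 ?_⟩
  filter_upwards [hbtop.eventually (eventually_pos_and_one_add_pos t x), hbound.bound,
    eventually_ge_atTop 1] with n ⟨hpos, hw⟩ hn hn1
  have hlevel : g n = poweredLevel t x (b n) := by rw [hg, hc, hd, poweredLevel]
  constructor
  · rw [hc, hd, mul_rpow_sub_two_mul_add_rpow t x hpos]
    positivity
  · rw [hlevel, eq_sqrt_two_pi_mul_mul_exp n.cast_nonneg hpos.le (hb n hn1).2]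
    convert hn using 1
    · simp only [Function.comp_apply, eval_quadratic, norm_eq_abs]
      congr 1
      field_simp
      ring
    · simp only [norm_pow, norm_inv, norm_eq_abs, Function.comp_apply]
      rw [abs_of_pos hpos]
      field_simp

/-- With `b_n` the unique positive solution of `2π b_n² exp(b_n²) = n²`,
`c_n = t b_n^{t−2}`, `d_n = b_n^t` (for `t > 0`, `t ≠ 2`) and `g_n = (c_n x + d_n)^{1/t}`:
`1 − Φ(g_n) = n⁻¹ e^{−x} (1 − ϑ₁ b_n^{−2} + ϑ₂ b_n^{−4} + O(b_n^{−6}))`, where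
`ϑ₁ = 1 + x + ((2−t)/2)x²` and
`ϑ₂ = 3 + 3x + (3/2)x² + ((2−t)(2t+1)/6)x³ + ((t−2)²/8)x⁴`. -/
theorem powered_extremes_tail_expansion
    (b : ℕ → ℝ)
    (hb : ∀ n : ℕ, 1 ≤ n → 0 < b n ∧
      2 * Real.pi * (b n) ^ 2 * Real.exp ((b n) ^ 2) = (n : ℝ) ^ 2)
    (t : ℝ) (ht : 0 < t) (ht2 : t ≠ 2) (x : ℝ)
    (c d g : ℕ → ℝ)
    (hc : ∀ n : ℕ, c n = t * b n ^ (t - 2))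
    (hd : ∀ n : ℕ, d n = b n ^ t)
    (hg : ∀ n : ℕ, g n = (c n * x + d n) ^ (1 / t)) :
    ∃ C > (0 : ℝ), ∃ N : ℕ, ∀ n : ℕ, N ≤ n →
      0 < c n * x + d n ∧
      |(n : ℝ) * Real.exp x * (1 - stdNormalCDF (g n)) -
        (1 - (1 + x + (2 - t) / 2 * x ^ 2) / (b n) ^ 2 +
          (3 + 3 * x + 3 / 2 * x ^ 2 + (2 - t) * (2 * t + 1) / 6 * x ^ 3 +
            (t - 2) ^ 2 / 8 * x ^ 4) / (b n) ^ 4)|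
      ≤ C / (b n) ^ 6 :=
  powered_extremes_tail_expansion_general b hb t ht.ne' x c d g hc hd hg
end

section
/- Fix t > 0 with t ≠ 2 and x ∈ ℝ, and let ν_n = Φ(g_n)^{n−1} − (1 − Φ(g_n))^{n−1} where g_n = (c_n x + d_n)^{1/t}, defined for n large enough that c_n x + d_n > 0. Then as n → ∞, ν_n = Λ(x) ( 1 + e^{−x} b_n^{−2} (1 + x + ((2−t)/2) x²) − e^{−x} b_n^{−4} ( 3 + 3x + (3/2) x² + ((2−t)(2t+1)/6) x³ + ((t−2)²/8) x⁴ − (e^{−x}/2)(1 + x + ((2−t)/2) x²)² ) + O(b_n^{−6}) ). -/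
/-
With the small parameter `s = b_n⁻²` one has `g_n = b_n (1 + t x s)^{1/t}`, while the defining
equation of `b_n` says `n φ(b_n) = b_n` for the normal density `φ`. Inserting both into the Mills
expansion `1 - Φ(u) = φ(u) (u⁻¹ - u⁻³ + 3 u⁻⁵) (1 + O(u⁻⁶))` cancels the factor `n`, and
`n (1 - Φ(g_n))` becomes, up to `O(s³)`, an explicit function of `s` alone, which is expanded to
second order. Since `1/n` is smaller than any power of `s`, one may replace `Φ(g_n)^{n-1}` by
`exp (-n (1 - Φ(g_n)))` and neglect `(1 - Φ(g_n))^{n-1}`.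
-/

open Real Filter Topology

/-- The Gumbel distribution function `Λ(x) = exp(−e^{−x})`. -/
noncomputable def gumbel (x : ℝ) : ℝ := Real.exp (-Real.exp (-x))

open Asymptotics MeasureTheory ProbabilityTheory

section QuadraticExpansion

/-- `f` has the second-order expansion `a₀ + a₁ s + a₂ s² + O(s³)` along `l`. The small parameter
`s` is an arbitrary function, so that sequences and functions of a real variable are both covered;
that it tends to `0` is assumed separately, where it matters. -/
def HasQuadraticExpansion {α 𝕜 : Type*} [NormedField 𝕜] (l : Filter α) (s f : α → 𝕜)
    (a₀ a₁ a₂ : 𝕜) : Prop :=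
  (fun i => f i - (a₀ + a₁ * s i + a₂ * s i ^ 2)) =O[l] fun i => s i ^ 3

namespace HasQuadraticExpansion

variable {α 𝕜 : Type*} [NormedField 𝕜] {l : Filter α} {s f g : α → 𝕜} {a₀ a₁ a₂ b₀ b₁ b₂ : 𝕜}

lemma congr' (hf : HasQuadraticExpansion l s f a₀ a₁ a₂) (hfg : f =ᶠ[l] g) :
    HasQuadraticExpansion l s g a₀ a₁ a₂ :=
  IsBigO.congr' hf (hfg.sub EventuallyEq.rfl) EventuallyEq.rfl

lemma of_sub_isBigO (hf : HasQuadraticExpansion l s f a₀ a₁ a₂)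
    (hgf : (fun i => g i - f i) =O[l] fun i => s i ^ 3) :
    HasQuadraticExpansion l s g a₀ a₁ a₂ :=
  (IsBigO.add hf hgf).congr_left fun i => by ring

lemma quadratic (l : Filter α) (s : α → 𝕜) (a₀ a₁ a₂ : 𝕜) :
    HasQuadraticExpansion l s (fun i => a₀ + a₁ * s i + a₂ * s i ^ 2) a₀ a₁ a₂ :=
  (isBigO_zero _ _).congr_left fun i => by ring

lemma const (l : Filter α) (s : α → 𝕜) (a : 𝕜) :
    HasQuadraticExpansion l s (fun _ => a) a 0 0 := by
  simpa using quadratic l s a 0 0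

lemma self (l : Filter α) (s : α → 𝕜) : HasQuadraticExpansion l s s 0 1 0 := by
  simpa using quadratic l s 0 1 0

lemma add (hf : HasQuadraticExpansion l s f a₀ a₁ a₂) (hg : HasQuadraticExpansion l s g b₀ b₁ b₂) :
    HasQuadraticExpansion l s (fun i => f i + g i) (a₀ + b₀) (a₁ + b₁) (a₂ + b₂) :=
  (IsBigO.add hf hg).congr_left fun i => by ring

lemma sub_const_isBigO (hf : HasQuadraticExpansion l s f a₀ a₁ a₂) (hs : Tendsto s l (𝓝 0)) :
    (fun i => f i - a₀) =O[l] s := by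
  have hlinear : (fun i => (a₁ + a₂ * s i) * s i) =O[l] s := by
    simpa using ((hs.const_mul a₂).const_add a₁).isBigO_one 𝕜 |>.mul (isBigO_refl s l)
  have hcubic : (fun i => s i ^ 3) =O[l] s := by
    simpa [pow_succ] using ((hs.pow 2).isBigO_one 𝕜).mul (isBigO_refl s l)
  exact ((IsBigO.trans hf hcubic).add hlinear).congr_left fun i => by ring

lemma tendsto (hf : HasQuadraticExpansion l s f a₀ a₁ a₂) (hs : Tendsto s l (𝓝 0)) :
    Tendsto f l (𝓝 a₀) :=
  tendsto_sub_nhds_zero_iff.1 ((hf.sub_const_isBigO hs).trans_tendsto hs)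

lemma isBigO_one (hf : HasQuadraticExpansion l s f a₀ a₁ a₂) (hs : Tendsto s l (𝓝 0)) :
    f =O[l] fun _ => (1 : 𝕜) :=
  (hf.tendsto hs).isBigO_one 𝕜

lemma mul (hf : HasQuadraticExpansion l s f a₀ a₁ a₂) (hg : HasQuadraticExpansion l s g b₀ b₁ b₂)
    (hs : Tendsto s l (𝓝 0)) :
    HasQuadraticExpansion l s (fun i => f i * g i)
      (a₀ * b₀) (a₀ * b₁ + a₁ * b₀) (a₀ * b₂ + a₁ * b₁ + a₂ * b₀) := by
  have hleft := IsBigO.mul hf (hg.isBigO_one hs)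
  have hright := IsBigO.mul ((quadratic l s a₀ a₁ a₂).isBigO_one hs) hg
  have hoverflow := ((hs.const_mul (a₂ * b₂)).const_add (a₁ * b₂ + a₂ * b₁)).isBigO_one 𝕜 |>.mul
    (isBigO_refl (fun i => s i ^ 3) l)
  simp only [mul_one, one_mul] at hleft hright hoverflow
  exact ((hleft.add hright).add hoverflow).congr_left fun i => by ring

lemma const_mul (c : 𝕜) (hf : HasQuadraticExpansion l s f a₀ a₁ a₂) :
    HasQuadraticExpansion l s (fun i => c * f i) (c * a₀) (c * a₁) (c * a₂) :=
  (IsBigO.const_mul_left hf c).congr_left fun i => by ring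

lemma sq (hf : HasQuadraticExpansion l s f a₀ a₁ a₂) (hs : Tendsto s l (𝓝 0)) :
    HasQuadraticExpansion l s (fun i => f i ^ 2)
      (a₀ ^ 2) (2 * a₀ * a₁) (2 * a₀ * a₂ + a₁ ^ 2) := by
  convert hf.mul hf hs using 1
  · simp only [pow_two]
  all_goals ring

lemma comp {φ : 𝕜 → 𝕜} {c₀ c₁ c₂ : 𝕜} (hφ : HasQuadraticExpansion (𝓝 0) id φ c₀ c₁ c₂)
    (hf : HasQuadraticExpansion l s f 0 a₁ a₂) (hs : Tendsto s l (𝓝 0)) :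
    HasQuadraticExpansion l s (fun i => φ (f i)) c₀ (c₁ * a₁) (c₁ * a₂ + c₂ * a₁ ^ 2) := by
  have hfs : f =O[l] s := by simpa using hf.sub_const_isBigO hs
  have hpoly : HasQuadraticExpansion l s (fun i => c₀ + c₁ * f i + c₂ * f i ^ 2)
      c₀ (c₁ * a₁) (c₁ * a₂ + c₂ * a₁ ^ 2) := by
    convert ((const l s c₀).add (hf.const_mul c₁)).add ((hf.sq hs).const_mul c₂) using 1 <;>
      ring
  exact hpoly.of_sub_isBigO ((IsBigO.comp_tendsto hφ (hf.tendsto hs)).trans (hfs.pow 3))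

end HasQuadraticExpansion

variable {α : Type*} {l : Filter α} {s : α → ℝ}

lemma hasQuadraticExpansion_exp_zero :
    HasQuadraticExpansion (𝓝 0) id Real.exp 1 1 (1 / 2) :=
  (Real.exp_sub_sum_range_isBigO_pow 3).congr_left fun z => by
    simp only [Finset.sum_range_succ, Finset.sum_range_zero, Nat.factorial, id]
    push_cast
    ring

lemma HasQuadraticExpansion.exp {f : α → ℝ} {a₀ a₁ a₂ : ℝ}
    (hf : HasQuadraticExpansion l s f a₀ a₁ a₂) (hs : Tendsto s l (𝓝 0)) :
    HasQuadraticExpansion l s (fun i => Real.exp (f i))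
      (Real.exp a₀) (Real.exp a₀ * a₁) (Real.exp a₀ * (a₂ + a₁ ^ 2 / 2)) := by
  have hcentered : HasQuadraticExpansion l s (fun i => f i + -a₀) 0 a₁ a₂ := by
    convert hf.add (const l s (-a₀)) using 1 <;> ring
  convert (hasQuadraticExpansion_exp_zero.comp hcentered hs).const_mul (Real.exp a₀) using 1
  · funext i
    rw [← Real.exp_add]
    ring_nf
  all_goals ring

end QuadraticExpansion

section BinomialExpansion

lemma ring_choose_succ_right {K : Type*} [Field K] [CharZero K] (p : K) (k : ℕ) :
    Ring.choose p (k + 1) = Ring.choose p k * (p - k) / (k + 1) := by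
  simp only [Ring.choose_eq_smul, descPochhammer_succ_right, Polynomial.smeval_mul,
    Polynomial.smeval_sub, Polynomial.smeval_X, Polynomial.smeval_natCast, Nat.factorial_succ,
    smul_eq_mul, pow_one, pow_zero, nsmul_eq_mul, mul_one]
  push_cast
  field_simp

lemma ring_choose_two {K : Type*} [Field K] [CharZero K] (p : K) :
    Ring.choose p 2 = p * (p - 1) / 2 := by
  rw [ring_choose_succ_right, Ring.choose_one_right]
  norm_num

lemma ring_choose_three {K : Type*} [Field K] [CharZero K] (p : K) :
    Ring.choose p 3 = p * (p - 1) * (p - 2) / 6 := by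
  rw [ring_choose_succ_right, ring_choose_two]
  push_cast
  ring

lemma one_add_rpow_sub_sum_choose_isBigO (p : ℝ) (n : ℕ) :
    (fun z : ℝ => (1 + z) ^ p - ∑ k ∈ Finset.range n, Ring.choose p k * z ^ k)
      =O[𝓝 0] fun z => z ^ n := by
  have h := (Real.one_add_rpow_hasFPowerSeriesAt_zero (a := p)).isBigO_sub_partialSum_pow n
  rw [← isBigO_norm_right]
  simpa [FormalMultilinearSeries.partialSum, binomialSeries, mul_comm] using h

variable {α : Type*} {l : Filter α} {s : α → ℝ}

lemma hasQuadraticExpansion_one_add_mul_rpow (hs : Tendsto s l (𝓝 0)) (a p : ℝ) :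
    HasQuadraticExpansion l s (fun i => (1 + a * s i) ^ p)
      1 (p * a) (p * (p - 1) / 2 * a ^ 2) := by
  have hbinomial : HasQuadraticExpansion (𝓝 0) id (fun z : ℝ => (1 + z) ^ p)
      1 p (p * (p - 1) / 2) := by
    simpa [HasQuadraticExpansion, Finset.sum_range_succ, ring_choose_two]
      using one_add_rpow_sub_sum_choose_isBigO p 3
  have hlinear : HasQuadraticExpansion l s (fun i => a * s i) 0 a 0 := by
    simpa using (HasQuadraticExpansion.self l s).const_mul a
  simpa using hbinomial.comp hlinear hs

-- Dividing by `s` costs one order, so the binomial series is needed up to its cubic term.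
lemma hasQuadraticExpansion_one_add_mul_rpow_sub_one_div (hs : Tendsto s l (𝓝 0))
    (hs₀ : ∀ᶠ i in l, s i ≠ 0) (a p : ℝ) :
    HasQuadraticExpansion l s (fun i => ((1 + a * s i) ^ p - 1) / s i)
      (p * a) (p * (p - 1) / 2 * a ^ 2) (p * (p - 1) * (p - 2) / 6 * a ^ 3) := by
  have has : Tendsto (fun i => a * s i) l (𝓝 0) := by simpa using hs.const_mul a
  have hpow : (fun i => (a * s i) ^ 4) =O[l] fun i => s i ^ 4 :=
    ((isBigO_refl s l).const_mul_left a).pow 4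
  have htaylor := ((one_add_rpow_sub_sum_choose_isBigO p 4).comp_tendsto has).trans hpow
  refine (htaylor.mul (isBigO_refl (fun i => (s i)⁻¹) l)).congr' ?_ ?_
  · filter_upwards [hs₀] with i hi
    simp only [Function.comp_apply, Finset.sum_range_succ, Finset.sum_range_zero,
      Ring.choose_zero_right, Ring.choose_one_right, ring_choose_two, ring_choose_three]
    field_simp
    ring
  · filter_upwards [hs₀] with i hi
    field_simp

end BinomialExpansion

section GaussianTail

lemma hasDerivAt_gaussianPDFReal (μ : ℝ) (v : NNReal) (u : ℝ) :
    HasDerivAt (gaussianPDFReal μ v) (-((u - μ) / v) * gaussianPDFReal μ v u) u := by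
  have hexponent : HasDerivAt (fun u : ℝ => -(u - μ) ^ 2 / (2 * v)) (-((u - μ) / v)) u := by
    refine ((((hasDerivAt_id' u).sub_const μ).pow 2).neg.div_const (2 * (v : ℝ))).congr_deriv ?_
    rw [← mul_div_mul_left (u - μ) (v : ℝ) two_ne_zero]
    ring
  refine (hexponent.exp.const_mul (√(2 * π * v))⁻¹).congr_deriv ?_
  rw [gaussianPDFReal]
  ring

lemma gaussianPDFReal_isBigO_inv_pow (k : ℕ) :
    gaussianPDFReal 0 1 =O[atTop] fun u => u⁻¹ ^ k := by
  have hdecay := (rexp_neg_quadratic_isLittleO_rpow_atTop (a := -1 / 2) (by norm_num) 0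
    (-(k : ℝ))).isBigO.const_mul_left (√(2 * π))⁻¹
  refine hdecay.congr' (Eventually.of_forall fun u => ?_) ?_
  · simp only [gaussianPDFReal, NNReal.coe_one]
    ring_nf
  · filter_upwards [eventually_gt_atTop 0] with u hu
    rw [Real.rpow_neg hu.le, Real.rpow_natCast, inv_pow]

lemma stdNormalCDF_eq_integral_gaussianPDFReal (g : ℝ) :
    stdNormalCDF g = ∫ u in Set.Iic g, gaussianPDFReal 0 1 u := by
  simp [stdNormalCDF, gaussianPDFReal, div_eq_inv_mul]

lemma one_sub_stdNormalCDF_s7 (g : ℝ) :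
    1 - stdNormalCDF g = ∫ u in Set.Ioi g, gaussianPDFReal 0 1 u := by
  rw [stdNormalCDF_eq_integral_gaussianPDFReal, sub_eq_iff_eq_add',
    ← integral_gaussianPDFReal_eq_one 0 one_ne_zero]
  exact (intervalIntegral.integral_Iic_add_Ioi (integrable_gaussianPDFReal 0 1).integrableOn
    (integrable_gaussianPDFReal 0 1).integrableOn).symm

/-- The three-term truncation of the asymptotic series of the Gaussian tail `1 - Φ(u)` (Mills
ratio) at `u → ∞`. -/
noncomputable def millsApprox (u : ℝ) : ℝ :=
  gaussianPDFReal 0 1 u * (u⁻¹ - u⁻¹ ^ 3 + 3 * u⁻¹ ^ 5)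

lemma hasDerivAt_millsApprox {u : ℝ} (hu : u ≠ 0) :
    HasDerivAt millsApprox (-((1 + 15 * u⁻¹ ^ 6) * gaussianPDFReal 0 1 u)) u := by
  have hinv := hasDerivAt_inv hu
  refine ((hasDerivAt_gaussianPDFReal 0 1 u).mul
    ((hinv.sub (hinv.pow 3)).add ((hinv.pow 5).const_mul 3))).congr_deriv ?_
  simp only [Pi.sub_apply, Pi.pow_apply, Pi.add_apply, NNReal.coe_one]
  push_cast
  field_simp
  ring

lemma tendsto_millsApprox_atTop : Tendsto millsApprox atTop (𝓝 0) := by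
  have hinv : Tendsto (fun u : ℝ => u⁻¹) atTop (𝓝 0) := tendsto_inv_atTop_zero
  have hpdf : Tendsto (gaussianPDFReal 0 1) atTop (𝓝 0) :=
    (gaussianPDFReal_isBigO_inv_pow 1).trans_tendsto (by simpa using hinv)
  have hproduct := hpdf.mul ((hinv.sub (hinv.pow 3)).add ((hinv.pow 5).const_mul 3))
  rwa [zero_mul] at hproduct

lemma integrableOn_and_integral_Ioi_eq_millsApprox {g : ℝ} (hg : 0 < g) :
    IntegrableOn (fun u => (1 + 15 * u⁻¹ ^ 6) * gaussianPDFReal 0 1 u) (Set.Ioi g) ∧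
      ∫ u in Set.Ioi g, (1 + 15 * u⁻¹ ^ 6) * gaussianPDFReal 0 1 u = millsApprox g := by
  have hderiv : ∀ u ∈ Set.Ici g, HasDerivAt (fun u => -millsApprox u)
      ((1 + 15 * u⁻¹ ^ 6) * gaussianPDFReal 0 1 u) u := fun u hu => by
    simpa using (hasDerivAt_millsApprox (hg.trans_le hu).ne').fun_neg
  have hnonneg : ∀ u ∈ Set.Ioi g, 0 ≤ (1 + 15 * u⁻¹ ^ 6) * gaussianPDFReal 0 1 u :=
    fun u _ => mul_nonneg (by positivity) (gaussianPDFReal_nonneg 0 1 u)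
  have hlim : Tendsto (fun u => -millsApprox u) atTop (𝓝 0) := by
    simpa using tendsto_millsApprox_atTop.neg
  exact ⟨integrableOn_Ioi_deriv_of_nonneg' hderiv hnonneg hlim,
    by simpa using integral_Ioi_of_hasDerivAt_of_nonneg' hderiv hnonneg hlim⟩

lemma one_sub_stdNormalCDF_le_millsApprox {g : ℝ} (hg : 0 < g) :
    1 - stdNormalCDF g ≤ millsApprox g := by
  obtain ⟨hint, heq⟩ := integrableOn_and_integral_Ioi_eq_millsApprox hg
  rw [one_sub_stdNormalCDF_s7, ← heq]
  refine setIntegral_mono_on (integrable_gaussianPDFReal 0 1).integrableOn hint measurableSet_Ioi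
    fun u _ => le_mul_of_one_le_left (gaussianPDFReal_nonneg 0 1 u) ?_
  exact le_add_of_nonneg_right (by positivity)

lemma millsApprox_le_mul_one_sub_stdNormalCDF {g : ℝ} (hg : 0 < g) :
    millsApprox g ≤ (1 + 15 * g⁻¹ ^ 6) * (1 - stdNormalCDF g) := by
  obtain ⟨hint, heq⟩ := integrableOn_and_integral_Ioi_eq_millsApprox hg
  rw [one_sub_stdNormalCDF_s7, ← heq, ← integral_const_mul]
  refine setIntegral_mono_on hint ((integrable_gaussianPDFReal 0 1).integrableOn.const_mul _)
    measurableSet_Ioi fun u (hu : g < u) => ?_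
  have := gaussianPDFReal_nonneg 0 1 u
  have := (hg.trans hu).le
  gcongr

lemma one_sub_stdNormalCDF_sub_millsApprox_isBigO :
    (fun u => 1 - stdNormalCDF u - millsApprox u) =O[atTop] fun u => u⁻¹ ^ 6 * millsApprox u := by
  refine IsBigO.of_bound 15 ?_
  filter_upwards [eventually_gt_atTop 0] with u hu
  have hle := one_sub_stdNormalCDF_le_millsApprox hu
  rw [norm_of_nonpos (sub_nonpos.2 hle), neg_sub, sub_le_iff_le_add]
  calc millsApprox u ≤ (1 + 15 * u⁻¹ ^ 6) * (1 - stdNormalCDF u) :=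
        millsApprox_le_mul_one_sub_stdNormalCDF hu
    _ = 15 * (u⁻¹ ^ 6 * (1 - stdNormalCDF u)) + (1 - stdNormalCDF u) := by ring
    _ ≤ 15 * ‖u⁻¹ ^ 6 * millsApprox u‖ + (1 - stdNormalCDF u) := by
        gcongr
        exact (mul_le_mul_of_nonneg_left hle (by positivity)).trans (le_norm_self _)

end GaussianTail

section NormalizingConstants

/-- The defining equation of the norming sequence `b_n` of Gaussian extremes; it imposes nothing on
`b 0`. -/
def IsGaussianNorming (b : ℕ → ℝ) : Prop :=
  ∀ n : ℕ, 1 ≤ n → 0 < b n ∧ 2 * π * b n ^ 2 * Real.exp (b n ^ 2) = (n : ℝ) ^ 2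

lemma mul_gaussianPDFReal_eq_self {B N : ℝ} (hB : 0 < B) (hN : 0 ≤ N)
    (h : 2 * π * B ^ 2 * Real.exp (B ^ 2) = N ^ 2) : N * gaussianPDFReal 0 1 B = B := by
  have hN_eq : N = √(2 * π) * B * Real.exp (B ^ 2 / 2) := by
    refine (pow_left_inj₀ hN (by positivity) two_ne_zero).1 ?_
    rw [← h, mul_pow, mul_pow, Real.sq_sqrt (by positivity), ← Real.exp_nat_mul]
    push_cast
    ring_nf
  have hexp : Real.exp (B ^ 2 / 2) * Real.exp (-B ^ 2 / 2) = 1 := by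
    rw [← Real.exp_add, neg_div, add_neg_cancel, Real.exp_zero]
  calc N * gaussianPDFReal 0 1 B
      = √(2 * π) * (√(2 * π))⁻¹ * B * (Real.exp (B ^ 2 / 2) * Real.exp (-B ^ 2 / 2)) := by
        rw [hN_eq, gaussianPDFReal]
        simp only [NNReal.coe_one, mul_one, sub_zero]
        ring
    _ = B := by rw [hexp, mul_inv_cancel₀ (by positivity), one_mul, mul_one]

lemma mul_millsApprox_mul {B N : ℝ} (hB : B ≠ 0) (h : N * gaussianPDFReal 0 1 B = B) (w : ℝ) :
    N * millsApprox (B * w) =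
      w⁻¹ * Real.exp (-(1 / 2) * ((w ^ 2 - 1) / (B ^ 2)⁻¹)) *
        (1 + -1 * ((B ^ 2)⁻¹ * w⁻¹ ^ 2) + 3 * ((B ^ 2)⁻¹ * w⁻¹ ^ 2) ^ 2) := by
  have hpdf : gaussianPDFReal 0 1 (B * w) =
      gaussianPDFReal 0 1 B * Real.exp (-(1 / 2) * ((w ^ 2 - 1) / (B ^ 2)⁻¹)) := by
    simp only [gaussianPDFReal]
    rw [mul_assoc _ (Real.exp _), ← Real.exp_add, div_inv_eq_mul, NNReal.coe_one]
    ring_nf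
  rw [millsApprox, hpdf, mul_inv]
  calc _ = N * gaussianPDFReal 0 1 B * B⁻¹ *
        (w⁻¹ * Real.exp (-(1 / 2) * ((w ^ 2 - 1) / (B ^ 2)⁻¹)) *
          (1 + -1 * ((B ^ 2)⁻¹ * w⁻¹ ^ 2) + 3 * ((B ^ 2)⁻¹ * w⁻¹ ^ 2) ^ 2)) := by ring
    _ = _ := by rw [h, mul_inv_cancel₀ hB, one_mul]

namespace IsGaussianNorming

variable {b : ℕ → ℝ}

lemma tendsto_atTop (hb : IsGaussianNorming b) : Tendsto b atTop atTop := by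
  rw [Filter.tendsto_atTop]
  intro M
  have hlarge : ∀ᶠ n : ℕ in atTop, 2 * π * M ^ 2 * Real.exp (M ^ 2) < (n : ℝ) ^ 2 :=
    ((tendsto_pow_atTop two_ne_zero).comp tendsto_natCast_atTop_atTop).eventually_gt_atTop _
  filter_upwards [hlarge, eventually_ge_atTop 1] with n hn hn1
  obtain ⟨hpos, heq⟩ := hb n hn1
  by_contra! hlt
  rw [← heq] at hn
  exact hn.not_ge (by gcongr)

lemma natCast_mul_gaussianPDFReal (hb : IsGaussianNorming b) {n : ℕ} (hn : 1 ≤ n) :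
    n * gaussianPDFReal 0 1 (b n) = b n :=
  mul_gaussianPDFReal_eq_self (hb n hn).1 n.cast_nonneg (hb n hn).2

lemma inv_natCast_isBigO (hb : IsGaussianNorming b) :
    (fun n : ℕ => (n : ℝ)⁻¹) =O[atTop] fun n => (b n ^ 2)⁻¹ ^ 3 := by
  have hbt := hb.tendsto_atTop
  have hpdf := (gaussianPDFReal_isBigO_inv_pow 6).comp_tendsto hbt
  have hinv : (fun n => (b n)⁻¹) =O[atTop] fun _ => (1 : ℝ) :=
    hbt.inv_tendsto_atTop.isBigO_one ℝ
  refine (hpdf.mul hinv).congr' ?_ (Eventually.of_forall fun n => ?_)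
  · filter_upwards [eventually_ge_atTop 1] with n hn
    have hn0 : (n : ℝ) ≠ 0 := by positivity
    rw [Function.comp_apply, ← div_eq_mul_inv, div_eq_iff (hb n hn).1.ne',
      eq_inv_mul_iff_mul_eq₀ hn0, hb.natCast_mul_gaussianPDFReal hn]
  · simp only [Function.comp_apply, mul_one]
    ring

lemma tendsto_inv_sq (hb : IsGaussianNorming b) : Tendsto (fun n => (b n ^ 2)⁻¹) atTop (𝓝 0) :=
  ((tendsto_pow_atTop two_ne_zero).comp hb.tendsto_atTop).inv_tendsto_atTop

end IsGaussianNorming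

end NormalizingConstants

section PoweredScale

/-- The ratio `g_n / b_n` as a function of the small parameter `s = b_n⁻²`. -/
noncomputable def scaleFactor (t x s : ℝ) : ℝ := (1 + t * x * s) ^ (1 / t)

lemma powered_affine_eq {B : ℝ} (hB : 0 < B) (t x : ℝ) :
    t * B ^ (t - 2) * x + B ^ t = B ^ t * (1 + t * x * (B ^ 2)⁻¹) := by
  rw [Real.rpow_sub hB, Real.rpow_two]
  ring

lemma powered_affine_rpow_eq {B t x : ℝ} (hB : 0 < B) (ht : t ≠ 0)
    (h : 0 ≤ 1 + t * x * (B ^ 2)⁻¹) :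
    (t * B ^ (t - 2) * x + B ^ t) ^ (1 / t) = B * scaleFactor t x (B ^ 2)⁻¹ := by
  rw [powered_affine_eq hB, Real.mul_rpow (by positivity) h, ← Real.rpow_mul hB.le,
    mul_one_div_cancel ht, Real.rpow_one, scaleFactor]

variable {α : Type*} {l : Filter α} {s : α → ℝ} {t : ℝ}

lemma eventually_one_add_mul_pos (hs : Tendsto s l (𝓝 0)) (a : ℝ) : ∀ᶠ i in l, 0 < 1 + a * s i := by
  have hlim : Tendsto (fun i => 1 + a * s i) l (𝓝 1) := by
    simpa using (hs.const_mul a).const_add 1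
  exact hlim.eventually_const_lt one_pos

lemma tendsto_scaleFactor (hs : Tendsto s l (𝓝 0)) (t x : ℝ) :
    Tendsto (fun i => scaleFactor t x (s i)) l (𝓝 1) :=
  (hasQuadraticExpansion_one_add_mul_rpow hs (t * x) (1 / t)).tendsto hs

lemma hasQuadraticExpansion_inv_scaleFactor (hs : Tendsto s l (𝓝 0)) (ht : t ≠ 0) (x : ℝ) :
    HasQuadraticExpansion l s (fun i => (scaleFactor t x (s i))⁻¹)
      1 (-x) ((1 + t) / 2 * x ^ 2) := by
  have hrpow : HasQuadraticExpansion l s (fun i => (1 + t * x * s i) ^ (-(1 / t)))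
      1 (-x) ((1 + t) / 2 * x ^ 2) := by
    convert hasQuadraticExpansion_one_add_mul_rpow hs (t * x) (-(1 / t)) using 1 <;>
      (field_simp; try ring)
  refine hrpow.congr' ?_
  filter_upwards [eventually_one_add_mul_pos hs (t * x)] with i hi
  rw [Real.rpow_neg hi.le, scaleFactor]

lemma hasQuadraticExpansion_scaleFactor_sq_sub_one_div (hs : Tendsto s l (𝓝 0))
    (hs₀ : ∀ᶠ i in l, s i ≠ 0) (ht : t ≠ 0) (x : ℝ) :
    HasQuadraticExpansion l s (fun i => (scaleFactor t x (s i) ^ 2 - 1) / s i)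
      (2 * x) ((2 - t) * x ^ 2) ((2 - t) * (2 - 2 * t) / 3 * x ^ 3) := by
  have hrpow : HasQuadraticExpansion l s (fun i => ((1 + t * x * s i) ^ (2 / t) - 1) / s i)
      (2 * x) ((2 - t) * x ^ 2) ((2 - t) * (2 - 2 * t) / 3 * x ^ 3) := by
    convert hasQuadraticExpansion_one_add_mul_rpow_sub_one_div hs hs₀ (t * x) (2 / t) using 1 <;>
      (field_simp; try ring)
  refine hrpow.congr' ?_
  filter_upwards [eventually_one_add_mul_pos hs (t * x)] with i hi
  rw [scaleFactor, ← Real.rpow_mul_natCast hi.le, Nat.cast_two, one_div_mul_eq_div]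

lemma hasQuadraticExpansion_rescaled_millsApprox (hs : Tendsto s l (𝓝 0))
    (hs₀ : ∀ᶠ i in l, s i ≠ 0) (ht : t ≠ 0) (x : ℝ) :
    HasQuadraticExpansion l s
      (fun i => (scaleFactor t x (s i))⁻¹ *
        Real.exp (-(1 / 2) * ((scaleFactor t x (s i) ^ 2 - 1) / s i)) *
        (1 + -1 * (s i * (scaleFactor t x (s i))⁻¹ ^ 2) +
          3 * (s i * (scaleFactor t x (s i))⁻¹ ^ 2) ^ 2))
      (Real.exp (-x)) (-Real.exp (-x) * (1 + x + (2 - t) / 2 * x ^ 2))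
      (Real.exp (-x) * (3 + 3 * x + 3 / 2 * x ^ 2 + (2 - t) * (2 * t + 1) / 6 * x ^ 3 +
        (t - 2) ^ 2 / 8 * x ^ 4)) := by
  have hinv := hasQuadraticExpansion_inv_scaleFactor hs ht x
  have hexp := ((hasQuadraticExpansion_scaleFactor_sq_sub_one_div hs hs₀ ht x).const_mul
    (-(1 / 2))).exp hs
  have hsq := (HasQuadraticExpansion.self l s).mul (hinv.sq hs) hs
  have hseries := ((HasQuadraticExpansion.const l s 1).add (hsq.const_mul (-1))).add
    ((hsq.sq hs).const_mul 3)
  rw [show -(1 / 2) * (2 * x) = -x by ring] at hexp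
  convert (hinv.mul hexp hs).mul hseries hs using 1 <;> ring

end PoweredScale

section PoissonLimit

lemma log_one_sub_add_self_isBigO :
    (fun z : ℝ => Real.log (1 - z) + z) =O[𝓝 0] fun z => z ^ 2 := by
  refine IsBigO.of_bound 2 ?_
  have hsmall : ∀ᶠ z : ℝ in 𝓝 0, |z| < 1 / 2 :=
    continuous_abs.tendsto' 0 0 abs_zero |>.eventually_lt_const (by norm_num)
  filter_upwards [hsmall] with z hz
  have hlog := Real.abs_log_sub_add_sum_range_le (hz.trans (by norm_num)) 1
  norm_num at hlog
  rw [Real.norm_eq_abs, add_comm, Real.norm_of_nonneg (sq_nonneg z)]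
  refine hlog.trans ?_
  rw [div_le_iff₀ (by linarith)]
  nlinarith [sq_nonneg z]

variable {q : ℕ → ℝ}

lemma isBigO_inv_natCast_of_natCast_mul_isBigO_one
    (hq : (fun n : ℕ => n * q n) =O[atTop] fun _ => (1 : ℝ)) :
    q =O[atTop] fun n => (n : ℝ)⁻¹ := by
  refine (hq.mul (isBigO_refl (fun n : ℕ => (n : ℝ)⁻¹) atTop)).congr' ?_ ?_
  · filter_upwards [eventually_ne_atTop 0] with n hn
    field_simp
  · simp

lemma sub_one_mul_log_one_sub_add_isBigO
    (hq : (fun n : ℕ => n * q n) =O[atTop] fun _ => (1 : ℝ)) :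
    (fun n : ℕ => ((n : ℝ) - 1) * Real.log (1 - q n) + n * q n)
      =O[atTop] fun n => (n : ℝ)⁻¹ := by
  have hqn := isBigO_inv_natCast_of_natCast_mul_isBigO_one hq
  have hq0 : Tendsto q atTop (𝓝 0) := hqn.trans_tendsto tendsto_inv_atTop_nhds_zero_nat
  have hlog : (fun n => Real.log (1 - q n) + q n) =O[atTop] fun n => q n ^ 2 :=
    log_one_sub_add_self_isBigO.comp_tendsto hq0
  have hpred : (fun n : ℕ => (n : ℝ) - 1) =O[atTop] fun n : ℕ => (n : ℝ) := by
    refine IsBigO.of_bound 1 ?_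
    filter_upwards [eventually_ge_atTop 1] with n hn
    have : (1 : ℝ) ≤ n := by exact_mod_cast hn
    rw [one_mul, Real.norm_of_nonneg (by linarith), Real.norm_of_nonneg (by linarith)]
    linarith
  have hmain : (fun n : ℕ => ((n : ℝ) - 1) * (Real.log (1 - q n) + q n)) =O[atTop] q := by
    have hbound := hq.mul (isBigO_refl q atTop)
    simp only [one_mul] at hbound
    exact ((hpred.mul hlog).congr_right fun n => by ring).trans hbound
  exact ((hmain.add (isBigO_refl q atTop)).trans hqn).congr_left fun n => by ring

lemma pow_sub_one_isBigO_of_natCast_mul_isBigO_one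
    (hq : (fun n : ℕ => n * q n) =O[atTop] fun _ => (1 : ℝ)) :
    (fun n => q n ^ (n - 1)) =O[atTop] fun n => (n : ℝ)⁻¹ := by
  have hqn := isBigO_inv_natCast_of_natCast_mul_isBigO_one hq
  have hq0 : Tendsto (fun n => ‖q n‖) atTop (𝓝 0) :=
    (hqn.trans_tendsto tendsto_inv_atTop_nhds_zero_nat).norm.trans (by simp)
  refine IsBigO.trans (IsBigO.of_bound 1 ?_) hqn
  filter_upwards [hq0.eventually_le_const one_pos, eventually_ge_atTop 2] with n hle hn
  rw [one_mul, norm_pow]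
  exact pow_le_of_le_one (norm_nonneg _) hle (by lia)

variable {s : ℕ → ℝ} {a₀ a₁ a₂ : ℝ}

-- `(1 - q)^(n-1) = exp ((n-1) log (1 - q))`, whose exponent is `-n q` up to `O(1/n)`.
lemma hasQuadraticExpansion_one_sub_pow_sub_pow (hs : Tendsto s atTop (𝓝 0))
    (hn : (fun n : ℕ => (n : ℝ)⁻¹) =O[atTop] fun n => s n ^ 3)
    (hq : HasQuadraticExpansion atTop s (fun n : ℕ => n * q n) a₀ a₁ a₂) :
    HasQuadraticExpansion atTop s (fun n => (1 - q n) ^ (n - 1) - q n ^ (n - 1))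
      (Real.exp (-a₀)) (Real.exp (-a₀) * -a₁) (Real.exp (-a₀) * (-a₂ + a₁ ^ 2 / 2)) := by
  have hq1 := hq.isBigO_one hs
  have hq0 : Tendsto q atTop (𝓝 0) :=
    (isBigO_inv_natCast_of_natCast_mul_isBigO_one hq1).trans_tendsto
      tendsto_inv_atTop_nhds_zero_nat
  have hexponent : HasQuadraticExpansion atTop s
      (fun n : ℕ => ((n : ℝ) - 1) * Real.log (1 - q n)) (-a₀) (-a₁) (-a₂) := by
    convert (hq.const_mul (-1)).of_sub_isBigO (((sub_one_mul_log_one_sub_add_isBigO hq1).trans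
      hn).congr_left fun n => ?_) using 1 <;> ring
  have hpow : HasQuadraticExpansion atTop s (fun n => (1 - q n) ^ (n - 1))
      (Real.exp (-a₀)) (Real.exp (-a₀) * -a₁) (Real.exp (-a₀) * (-a₂ + (-a₁) ^ 2 / 2)) := by
    refine (hexponent.exp hs).congr' ?_
    filter_upwards [hq0.eventually_lt_const one_pos, eventually_ge_atTop 1] with n hlt hn1
    rw [mul_comm, Real.exp_mul, Real.exp_log (by linarith), ← Real.rpow_natCast,
      Nat.cast_sub hn1, Nat.cast_one]
  rw [neg_sq] at hpow
  refine hpow.of_sub_isBigO ?_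
  exact ((pow_sub_one_isBigO_of_natCast_mul_isBigO_one hq1).trans hn).neg_left.congr_left
    fun n => by ring

end PoissonLimit

section PoweredExtremes

variable {b : ℕ → ℝ} {t : ℝ}

lemma hasQuadraticExpansion_natCast_mul_millsApprox (hb : IsGaussianNorming b)
    (ht : t ≠ 0) (x : ℝ) :
    HasQuadraticExpansion atTop (fun n => (b n ^ 2)⁻¹)
      (fun n => n * millsApprox (b n * scaleFactor t x (b n ^ 2)⁻¹))
      (Real.exp (-x)) (-Real.exp (-x) * (1 + x + (2 - t) / 2 * x ^ 2))
      (Real.exp (-x) * (3 + 3 * x + 3 / 2 * x ^ 2 + (2 - t) * (2 * t + 1) / 6 * x ^ 3 +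
        (t - 2) ^ 2 / 8 * x ^ 4)) := by
  have hpos := hb.tendsto_atTop.eventually_gt_atTop 0
  refine (hasQuadraticExpansion_rescaled_millsApprox hb.tendsto_inv_sq
    (hpos.mono fun n hn => (by positivity : (b n ^ 2)⁻¹ ≠ 0)) ht x).congr' ?_
  filter_upwards [eventually_ge_atTop 1] with n hn
  exact (mul_millsApprox_mul (hb n hn).1.ne' (hb.natCast_mul_gaussianPDFReal hn) _).symm

lemma hasQuadraticExpansion_natCast_mul_one_sub_stdNormalCDF (hb : IsGaussianNorming b)
    (ht : t ≠ 0) (x : ℝ) :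
    HasQuadraticExpansion atTop (fun n => (b n ^ 2)⁻¹)
      (fun n => n * (1 - stdNormalCDF (b n * scaleFactor t x (b n ^ 2)⁻¹)))
      (Real.exp (-x)) (-Real.exp (-x) * (1 + x + (2 - t) / 2 * x ^ 2))
      (Real.exp (-x) * (3 + 3 * x + 3 / 2 * x ^ 2 + (2 - t) * (2 * t + 1) / 6 * x ^ 3 +
        (t - 2) ^ 2 / 8 * x ^ 4)) := by
  set w : ℕ → ℝ := fun n => scaleFactor t x (b n ^ 2)⁻¹
  have hs := hb.tendsto_inv_sq
  have hmills := hasQuadraticExpansion_natCast_mul_millsApprox hb ht x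
  have hw : Tendsto w atTop (𝓝 1) := tendsto_scaleFactor hs t x
  have hwinv : (fun n => (w n)⁻¹ ^ 6) =O[atTop] fun _ => (1 : ℝ) :=
    ((hw.inv₀ one_ne_zero).pow 6).isBigO_one ℝ
  have hg : Tendsto (fun n => b n * w n) atTop atTop :=
    hb.tendsto_atTop.atTop_mul_pos one_pos hw
  have htail := (isBigO_refl (fun n : ℕ => (n : ℝ)) atTop).mul
    (one_sub_stdNormalCDF_sub_millsApprox_isBigO.comp_tendsto hg)
  have hrelative : (fun n : ℕ => n * ((b n * w n)⁻¹ ^ 6 * millsApprox (b n * w n)))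
      =O[atTop] fun n => (b n ^ 2)⁻¹ ^ 3 := by
    have hbound := ((hmills.isBigO_one hs).mul hwinv).mul
      (isBigO_refl (fun n => (b n ^ 2)⁻¹ ^ 3) atTop)
    simp only [one_mul] at hbound
    exact hbound.congr_left fun n => by rw [mul_inv]; ring
  exact hmills.of_sub_isBigO ((htail.trans hrelative).congr_left fun n => by
    rw [Function.comp_apply]; ring)

lemma hasQuadraticExpansion_powered_extremes (hb : IsGaussianNorming b)
    (ht : t ≠ 0) (x : ℝ) :
    HasQuadraticExpansion atTop (fun n => (b n ^ 2)⁻¹)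
      (fun n => stdNormalCDF (b n * scaleFactor t x (b n ^ 2)⁻¹) ^ (n - 1) -
        (1 - stdNormalCDF (b n * scaleFactor t x (b n ^ 2)⁻¹)) ^ (n - 1))
      (gumbel x) (gumbel x * (Real.exp (-x) * (1 + x + (2 - t) / 2 * x ^ 2)))
      (-(gumbel x * (Real.exp (-x) *
        (3 + 3 * x + 3 / 2 * x ^ 2 + (2 - t) * (2 * t + 1) / 6 * x ^ 3 +
          (t - 2) ^ 2 / 8 * x ^ 4 -
          Real.exp (-x) / 2 * (1 + x + (2 - t) / 2 * x ^ 2) ^ 2)))) := by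
  convert hasQuadraticExpansion_one_sub_pow_sub_pow hb.tendsto_inv_sq hb.inv_natCast_isBigO
    (hasQuadraticExpansion_natCast_mul_one_sub_stdNormalCDF hb ht x) using 1
  · simp only [sub_sub_cancel]
  · rw [gumbel]
  · rw [gumbel]; ring
  · rw [gumbel]; ring

end PoweredExtremes

theorem powered_extremes_nu_expansion_t_ne_two_general
    (b : ℕ → ℝ)
    (hb : IsGaussianNorming b)
    (t : ℝ) (ht : t ≠ 0) (x : ℝ)
    (c d g ν : ℕ → ℝ)
    (hc : ∀ n : ℕ, c n = t * b n ^ (t - 2))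
    (hd : ∀ n : ℕ, d n = b n ^ t)
    (hg : ∀ n : ℕ, g n = (c n * x + d n) ^ (1 / t))
    (hν : ∀ n : ℕ, ν n = stdNormalCDF (g n) ^ (n - 1) -
      (1 - stdNormalCDF (g n)) ^ (n - 1)) :
    ∃ C > (0 : ℝ), ∃ N : ℕ, ∀ n : ℕ, N ≤ n →
      0 < c n * x + d n ∧
      |ν n -
        gumbel x * (1 + Real.exp (-x) / (b n) ^ 2 * (1 + x + (2 - t) / 2 * x ^ 2) -
          Real.exp (-x) / (b n) ^ 4 *
            (3 + 3 * x + 3 / 2 * x ^ 2 + (2 - t) * (2 * t + 1) / 6 * x ^ 3 +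
              (t - 2) ^ 2 / 8 * x ^ 4 -
              Real.exp (-x) / 2 * (1 + x + (2 - t) / 2 * x ^ 2) ^ 2))|
      ≤ C / (b n) ^ 6 := by
  obtain ⟨C, hC, hbound⟩ := (hasQuadraticExpansion_powered_extremes hb ht x).exists_pos
  have hscale := eventually_one_add_mul_pos hb.tendsto_inv_sq (t * x)
  obtain ⟨N, hN⟩ := eventually_atTop.1 (hbound.bound.and (hscale.and (eventually_ge_atTop 1)))
  refine ⟨C, hC, N, fun n hn => ?_⟩
  obtain ⟨herr, hpos, hn1⟩ := hN n hn
  have hbn := (hb n hn1).1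
  have hgn : g n = b n * scaleFactor t x (b n ^ 2)⁻¹ := by
    rw [hg, hc, hd, powered_affine_rpow_eq hbn ht hpos.le]
  refine ⟨by rw [hc, hd, powered_affine_eq hbn]; positivity, ?_⟩
  beta_reduce at herr
  rw [← hgn, ← hν, Real.norm_eq_abs, Real.norm_of_nonneg (by positivity)] at herr
  convert herr using 1
  · ring_nf
  · ring

/-- Lemma 3.2(1): With `b_n` the unique positive solution of
`2π b_n² exp(b_n²) = n²`, `c_n = t b_n^{t−2}`, `d_n = b_n^t` (for `t > 0`, `t ≠ 2`),
`g_n = (c_n x + d_n)^{1/t}` and `ν_n = Φ(g_n)^{n−1} − (1 − Φ(g_n))^{n−1}`: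
`ν_n = Λ(x)(1 + e^{−x} b_n^{−2}(1 + x + ((2−t)/2)x²)
  − e^{−x} b_n^{−4}(3 + 3x + (3/2)x² + ((2−t)(2t+1)/6)x³ + ((t−2)²/8)x⁴
  − (e^{−x}/2)(1 + x + ((2−t)/2)x²)²) + O(b_n^{−6}))`. -/
theorem powered_extremes_nu_expansion_t_ne_two
    (b : ℕ → ℝ)
    (hb : ∀ n : ℕ, 1 ≤ n → 0 < b n ∧
      2 * Real.pi * (b n) ^ 2 * Real.exp ((b n) ^ 2) = (n : ℝ) ^ 2)
    (t : ℝ) (ht : 0 < t) (ht2 : t ≠ 2) (x : ℝ)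
    (c d g ν : ℕ → ℝ)
    (hc : ∀ n : ℕ, c n = t * b n ^ (t - 2))
    (hd : ∀ n : ℕ, d n = b n ^ t)
    (hg : ∀ n : ℕ, g n = (c n * x + d n) ^ (1 / t))
    (hν : ∀ n : ℕ, ν n = stdNormalCDF (g n) ^ (n - 1) -
      (1 - stdNormalCDF (g n)) ^ (n - 1)) :
    ∃ C > (0 : ℝ), ∃ N : ℕ, ∀ n : ℕ, N ≤ n →
      0 < c n * x + d n ∧
      |ν n -
        gumbel x * (1 + Real.exp (-x) / (b n) ^ 2 * (1 + x + (2 - t) / 2 * x ^ 2) -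
          Real.exp (-x) / (b n) ^ 4 *
            (3 + 3 * x + 3 / 2 * x ^ 2 + (2 - t) * (2 * t + 1) / 6 * x ^ 3 +
              (t - 2) ^ 2 / 8 * x ^ 4 -
              Real.exp (-x) / 2 * (1 + x + (2 - t) / 2 * x ^ 2) ^ 2))|
      ≤ C / (b n) ^ 6 :=
  powered_extremes_nu_expansion_t_ne_two_general b hb t ht.ne' x c d g ν hc hd hg hν
end

section
/- Fix x ∈ ℝ and let ν_n = Φ(h_n)^{n−1} − (1 − Φ(h_n))^{n−1} where h_n = (c_n x + d_n)^{1/2}, with c_n = 2 − 2b_n^{−2} and d_n = b_n² − 2b_n^{−2}, defined for n large enough that c_n x + d_n > 0. Then as n → ∞, ν_n = Λ(x) ( 1 − e^{−x} b_n^{−4} (7/2 + 3x + x²) + e^{−x} b_n^{−6} (43/3 + 14x + 6x² + (4/3) x³) + O(b_n^{−8}) ). -/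
open Real Filter Topology

/-!
Write `T b = √(2π) b exp(b² / 2)`, so that `n = T bₙ` and, by Mills' asymptotic series,
`T h * (1 - Φ(h)) = 1 - h⁻² + 3 h⁻⁴ - 15 h⁻⁶ + O(h⁻⁸)`. For `h² = c x + d` the ratio `T b / T h` is
`exp(-x + v)` with `v` explicit in `b⁻²`, and composing expansions in powers of `b⁻²` yields one
for `n (1 - Φ(hₙ))`, whose constant term is `exp(-x)`. Since `1 - Φ(hₙ) = O(1 / n)`, the difference
between `νₙ` and `exp(-n (1 - Φ(hₙ)))` is `O(1 / n)`, and `1 / n = 1 / T bₙ` is smaller than every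
power of `bₙ⁻²`.
-/

open Asymptotics MeasureTheory Polynomial

namespace PoweredExtremes

/-- Asymptotic expansion `f = P(ε) + O(ε ^ N)` along `l` in powers of the gauge `ε`. The expansion
is encoded by a whole polynomial `P`, of which only the class modulo `X ^ N` matters. -/
def HasExpansion {α : Type*} (l : Filter α) (ε : α → ℝ) (N : ℕ) (f : α → ℝ) (P : ℝ[X]) : Prop :=
  (fun a => f a - P.eval (ε a)) =O[l] fun a => ε a ^ N

namespace HasExpansion

variable {α β : Type*} {l : Filter α} {ε f g : α → ℝ} {N : ℕ} {P Q : ℝ[X]}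

lemma eval_isBigO_one (hε : Tendsto ε l (𝓝 0)) (P : ℝ[X]) :
    (fun a => P.eval (ε a)) =O[l] fun _ => (1 : ℝ) :=
  ((P.continuous.tendsto 0).comp hε).isBigO_one ℝ

lemma polynomial_eval (P : ℝ[X]) : HasExpansion l ε N (fun a => P.eval (ε a)) P :=
  (isBigO_zero _ _).congr_left fun _ => (sub_self _).symm

lemma congr' (hf : HasExpansion l ε N f P) (hfg : f =ᶠ[l] g) : HasExpansion l ε N g P :=
  IsBigO.congr' hf (hfg.mono fun a ha => by simp only [ha]) EventuallyEq.rfl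

lemma of_sub_isBigO (hf : HasExpansion l ε N f P)
    (h : (fun a => g a - f a) =O[l] fun a => ε a ^ N) : HasExpansion l ε N g P :=
  (h.add hf).congr_left fun _ => sub_add_sub_cancel _ _ _

lemma comp_tendsto {k : β → α} {l' : Filter β} (hf : HasExpansion l ε N f P)
    (hk : Tendsto k l' l) : HasExpansion l' (fun b => ε (k b)) N (fun b => f (k b)) P :=
  IsBigO.comp_tendsto hf hk

lemma add (hf : HasExpansion l ε N f P) (hg : HasExpansion l ε N g Q) :
    HasExpansion l ε N (fun a => f a + g a) (P + Q) :=
  (IsBigO.add hf hg).congr_left fun a => by rw [eval_add]; ring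

lemma isBigO_one (hε : Tendsto ε l (𝓝 0)) (hf : HasExpansion l ε N f P) :
    f =O[l] fun _ => (1 : ℝ) := by
  have hpow : (fun a => ε a ^ N) =O[l] fun _ => (1 : ℝ) := by
    simpa only [eval_pow, eval_X] using eval_isBigO_one hε (X ^ N)
  exact ((IsBigO.trans hf hpow).add (eval_isBigO_one hε P)).congr_left fun _ => sub_add_cancel _ _

lemma mul (hε : Tendsto ε l (𝓝 0)) (hf : HasExpansion l ε N f P) (hg : HasExpansion l ε N g Q) :
    HasExpansion l ε N (fun a => f a * g a) (P * Q) := by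
  have hleft := IsBigO.mul hf (hg.isBigO_one hε)
  have hright := (eval_isBigO_one hε P).mul hg
  simp only [mul_one, one_mul] at hleft hright
  exact (hleft.add hright).congr_left fun a => by rw [eval_mul]; ring

lemma const_mul (c : ℝ) (hf : HasExpansion l ε N f P) :
    HasExpansion l ε N (fun a => c * f a) (C c * P) :=
  (IsBigO.const_mul_left hf c).congr_left fun a => by rw [eval_mul, eval_C]; ring

lemma pow (hε : Tendsto ε l (𝓝 0)) (hf : HasExpansion l ε N f P) (n : ℕ) :
    HasExpansion l ε N (fun a => f a ^ n) (P ^ n) := by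
  induction n with
  | zero => simpa only [pow_zero, eval_one] using polynomial_eval (l := l) (ε := ε) (N := N) 1
  | succ n ih => simpa only [pow_succ] using ih.mul hε hf

lemma eval_comp (hε : Tendsto ε l (𝓝 0)) (hf : HasExpansion l ε N f P) (Q : ℝ[X]) :
    HasExpansion l ε N (fun a => Q.eval (f a)) (Q.comp P) := by
  induction Q using Polynomial.induction_on' with
  | add Q R hQ hR => simpa only [eval_add, add_comp] using hQ.add hR
  | monomial n c => simpa only [eval_monomial, monomial_comp] using (hf.pow hε n).const_mul c

lemma congr_coeff (hε : Tendsto ε l (𝓝 0)) (hf : HasExpansion l ε N f P)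
    (hPQ : ∀ i < N, P.coeff i = Q.coeff i) : HasExpansion l ε N f Q := by
  obtain ⟨R, hR⟩ : X ^ N ∣ P - Q :=
    X_pow_dvd_iff.2 fun i hi => by rw [coeff_sub, hPQ i hi, sub_self]
  have hdiff := (isBigO_refl (fun a => ε a ^ N) l).mul (eval_isBigO_one hε R)
  simp only [mul_one] at hdiff
  refine (IsBigO.add hf hdiff).congr_left fun a => ?_
  have heval := congr_arg (Polynomial.eval (ε a)) hR
  rw [eval_sub, eval_mul, eval_pow, eval_X] at heval
  rw [← heval, sub_add_sub_cancel]

lemma tendsto (hε : Tendsto ε l (𝓝 0)) (hN : N ≠ 0) (hf : HasExpansion l ε N f P) :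
    Tendsto f l (𝓝 (P.coeff 0)) := by
  have herr : Tendsto (fun a => f a - P.eval (ε a)) l (𝓝 0) :=
    IsBigO.trans_tendsto hf (by simpa only [zero_pow hN] using hε.pow N)
  have hmain : Tendsto (fun a => P.eval (ε a)) l (𝓝 (P.coeff 0)) := by
    rw [coeff_zero_eq_eval_zero]
    exact (P.continuous.tendsto 0).comp hε
  simpa only [sub_add_cancel, zero_add] using herr.add hmain

lemma isBigO_gauge (hε : Tendsto ε l (𝓝 0)) (hN : N ≠ 0) (hf : HasExpansion l ε N f P)
    (hP : P.coeff 0 = 0) : f =O[l] ε := by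
  obtain ⟨R, rfl⟩ := X_dvd_iff.2 hP
  have hpow : (fun a => ε a ^ N) =O[l] ε := by
    have h := (isBigO_refl ε l).mul (eval_isBigO_one hε (X ^ (N - 1)))
    simpa only [eval_pow, eval_X, mul_pow_sub_one hN, mul_one] using h
  have hmain := (isBigO_refl ε l).mul (eval_isBigO_one hε R)
  simp only [mul_one] at hmain
  exact ((IsBigO.trans hf hpow).add hmain).congr_left fun a => by rw [eval_mul, eval_X]; ring

lemma trans (hε : Tendsto ε l (𝓝 0)) (hN : N ≠ 0) (hg : HasExpansion l f N g Q)
    (hf : HasExpansion l ε N f P) (hP : P.coeff 0 = 0) : HasExpansion l ε N g (Q.comp P) :=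
  (hf.eval_comp hε Q).of_sub_isBigO (IsBigO.trans hg ((hf.isBigO_gauge hε hN hP).pow N))

end HasExpansion

/-- The polynomial `a₀ + a₁ X + a₂ X ^ 2 + a₃ X ^ 3`, representing a class modulo `X ^ 4`. The
constant term comes first, as in the expansions, unlike in `Cubic.toPoly`. -/
noncomputable def cubicPoly (a₀ a₁ a₂ a₃ : ℝ) : ℝ[X] :=
  C a₀ + C a₁ * X + C a₂ * X ^ 2 + C a₃ * X ^ 3

section CubicPoly

variable (a₀ a₁ a₂ a₃ b₀ b₁ b₂ b₃ : ℝ)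

@[simp] lemma coeff_cubicPoly_zero : (cubicPoly a₀ a₁ a₂ a₃).coeff 0 = a₀ := by
  simp [cubicPoly]

@[simp] lemma coeff_cubicPoly_one : (cubicPoly a₀ a₁ a₂ a₃).coeff 1 = a₁ := by
  simp [cubicPoly, coeff_C]

@[simp] lemma coeff_cubicPoly_two : (cubicPoly a₀ a₁ a₂ a₃).coeff 2 = a₂ := by
  simp [cubicPoly]

@[simp] lemma coeff_cubicPoly_three : (cubicPoly a₀ a₁ a₂ a₃).coeff 3 = a₃ := by
  simp [cubicPoly]

lemma eval_cubicPoly (t : ℝ) :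
    (cubicPoly a₀ a₁ a₂ a₃).eval t = a₀ + a₁ * t + a₂ * t ^ 2 + a₃ * t ^ 3 := by
  simp [cubicPoly]

lemma C_mul_cubicPoly (c : ℝ) :
    C c * cubicPoly a₀ a₁ a₂ a₃ = cubicPoly (c * a₀) (c * a₁) (c * a₂) (c * a₃) := by
  simp only [cubicPoly, C_mul]
  ring

lemma cubicPoly_add :
    cubicPoly a₀ a₁ a₂ a₃ + cubicPoly b₀ b₁ b₂ b₃ =
      cubicPoly (a₀ + b₀) (a₁ + b₁) (a₂ + b₂) (a₃ + b₃) := by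
  simp only [cubicPoly, C_add]
  ring

lemma coeff_cubicPoly_mul {i : ℕ} (hi : i < 4) :
    (cubicPoly a₀ a₁ a₂ a₃ * cubicPoly b₀ b₁ b₂ b₃).coeff i =
      (cubicPoly (a₀ * b₀) (a₀ * b₁ + a₁ * b₀) (a₀ * b₂ + a₁ * b₁ + a₂ * b₀)
        (a₀ * b₃ + a₁ * b₂ + a₂ * b₁ + a₃ * b₀)).coeff i := by
  interval_cases i <;>
    simp [coeff_mul, Finset.Nat.antidiagonal_succ, add_assoc]

lemma coeff_cubicPoly_comp {i : ℕ} (hi : i < 4) :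
    ((cubicPoly b₀ b₁ b₂ b₃).comp (cubicPoly 0 a₁ a₂ a₃)).coeff i =
      (cubicPoly b₀ (b₁ * a₁) (b₁ * a₂ + b₂ * a₁ ^ 2)
        (b₁ * a₃ + 2 * b₂ * a₁ * a₂ + b₃ * a₁ ^ 3)).coeff i := by
  have hcomp : (cubicPoly b₀ b₁ b₂ b₃).comp (cubicPoly 0 a₁ a₂ a₃) =
      C b₀ + C b₁ * (X * cubicPoly a₁ a₂ a₃ 0) +
        C b₂ * (X ^ 2 * (cubicPoly a₁ a₂ a₃ 0 * cubicPoly a₁ a₂ a₃ 0)) +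
        C b₃ * (X ^ 3 * (cubicPoly a₁ a₂ a₃ 0 * cubicPoly a₁ a₂ a₃ 0 * cubicPoly a₁ a₂ a₃ 0)) := by
    simp only [cubicPoly, add_comp, mul_comp, C_comp, X_comp, pow_comp, C_0]
    ring
  rw [hcomp]
  interval_cases i <;>
    simp [coeff_mul, Finset.Nat.antidiagonal_succ, coeff_X, coeff_C, coeff_X_pow,
      -mul_eq_mul_left_iff] <;>
    ring

lemma sum_range_four_C_mul_X_pow (a : ℕ → ℝ) :
    ∑ i ∈ Finset.range 4, C (a i) * X ^ i = cubicPoly (a 0) (a 1) (a 2) (a 3) := by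
  simp only [Finset.sum_range_succ, Finset.sum_range_zero, cubicPoly]
  ring

end CubicPoly

namespace HasExpansion

variable {α : Type*} {l : Filter α} {ε f g : α → ℝ} {a₀ a₁ a₂ a₃ b₀ b₁ b₂ b₃ : ℝ}

lemma const (c : ℝ) : HasExpansion l ε 4 (fun _ => c) (cubicPoly c 0 0 0) := by
  simpa [eval_cubicPoly] using polynomial_eval (l := l) (ε := ε) (N := 4) (cubicPoly c 0 0 0)

lemma const_mul_gauge (c : ℝ) : HasExpansion l ε 4 (fun a => c * ε a) (cubicPoly 0 c 0 0) := by
  simpa [eval_cubicPoly] using polynomial_eval (l := l) (ε := ε) (N := 4) (cubicPoly 0 c 0 0)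

lemma add_cubicPoly (hf : HasExpansion l ε 4 f (cubicPoly a₀ a₁ a₂ a₃))
    (hg : HasExpansion l ε 4 g (cubicPoly b₀ b₁ b₂ b₃)) :
    HasExpansion l ε 4 (fun a => f a + g a)
      (cubicPoly (a₀ + b₀) (a₁ + b₁) (a₂ + b₂) (a₃ + b₃)) :=
  cubicPoly_add .. ▸ hf.add hg

lemma const_mul_cubicPoly (c : ℝ) (hf : HasExpansion l ε 4 f (cubicPoly a₀ a₁ a₂ a₃)) :
    HasExpansion l ε 4 (fun a => c * f a) (cubicPoly (c * a₀) (c * a₁) (c * a₂) (c * a₃)) :=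
  C_mul_cubicPoly .. ▸ hf.const_mul c

lemma mul_cubicPoly (hε : Tendsto ε l (𝓝 0)) (hf : HasExpansion l ε 4 f (cubicPoly a₀ a₁ a₂ a₃))
    (hg : HasExpansion l ε 4 g (cubicPoly b₀ b₁ b₂ b₃)) :
    HasExpansion l ε 4 (fun a => f a * g a)
      (cubicPoly (a₀ * b₀) (a₀ * b₁ + a₁ * b₀) (a₀ * b₂ + a₁ * b₁ + a₂ * b₀)
        (a₀ * b₃ + a₁ * b₂ + a₂ * b₁ + a₃ * b₀)) :=
  (hf.mul hε hg).congr_coeff hε fun _ => coeff_cubicPoly_mul _ _ _ _ _ _ _ _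

lemma trans_cubicPoly (hε : Tendsto ε l (𝓝 0))
    (hg : HasExpansion l f 4 g (cubicPoly b₀ b₁ b₂ b₃))
    (hf : HasExpansion l ε 4 f (cubicPoly 0 a₁ a₂ a₃)) :
    HasExpansion l ε 4 g (cubicPoly b₀ (b₁ * a₁) (b₁ * a₂ + b₂ * a₁ ^ 2)
      (b₁ * a₃ + 2 * b₂ * a₁ * a₂ + b₃ * a₁ ^ 3)) :=
  (hg.trans hε four_ne_zero hf (coeff_cubicPoly_zero ..)).congr_coeff hε fun _ =>
    coeff_cubicPoly_comp _ _ _ _ _ _ _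

lemma comp_cubicPoly {G : ℝ → ℝ} (hε : Tendsto ε l (𝓝 0))
    (hG : HasExpansion (𝓝 0) id 4 G (cubicPoly b₀ b₁ b₂ b₃))
    (hf : HasExpansion l ε 4 f (cubicPoly 0 a₁ a₂ a₃)) :
    HasExpansion l ε 4 (fun a => G (f a)) (cubicPoly b₀ (b₁ * a₁) (b₁ * a₂ + b₂ * a₁ ^ 2)
      (b₁ * a₃ + 2 * b₂ * a₁ * a₂ + b₃ * a₁ ^ 3)) :=
  trans_cubicPoly hε (hG.comp_tendsto (by simpa using hf.tendsto hε four_ne_zero)) hf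

end HasExpansion

lemma hasExpansion_exp (N : ℕ) :
    HasExpansion (𝓝 0) id N Real.exp (∑ i ∈ Finset.range N, C (1 / (i.factorial : ℝ)) * X ^ i) := by
  refine (Real.exp_sub_sum_range_isBigO_pow N).congr_left fun t => ?_
  simp only [id_eq, eval_finsetSum, eval_mul, eval_C, eval_pow, eval_X, one_div_mul_eq_div]

lemma hasExpansion_exp_four : HasExpansion (𝓝 0) id 4 Real.exp (cubicPoly 1 1 (1 / 2) (1 / 6)) := by
  convert hasExpansion_exp 4
  rw [sum_range_four_C_mul_X_pow]
  norm_num [Nat.factorial]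

lemma hasExpansion_log_one_add (N : ℕ) :
    HasExpansion (𝓝 0) id (N + 1) (fun t => Real.log (1 + t))
      (∑ i ∈ Finset.range N, C ((-1 : ℝ) ^ i / (i + 1)) * X ^ (i + 1)) := by
  refine IsBigO.of_bound 2 ?_
  filter_upwards [Metric.ball_mem_nhds (0 : ℝ) (ε := 1 / 2) (by norm_num)] with t ht
  have ht' : |t| < 1 / 2 := by simpa only [mem_ball_zero_iff, Real.norm_eq_abs] using ht
  have hsum := Real.abs_log_sub_add_sum_range_le (x := -t) (by rw [abs_neg]; linarith) N
  rw [abs_neg, sub_neg_eq_add, add_comm] at hsum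
  calc ‖Real.log (1 + t) - Polynomial.eval (id t) _‖
      = |Real.log (1 + t) + ∑ i ∈ Finset.range N, (-t) ^ (i + 1) / ((i : ℝ) + 1)| := by
        rw [Real.norm_eq_abs, sub_eq_add_neg, eval_finsetSum, ← Finset.sum_neg_distrib]
        congr 2
        refine Finset.sum_congr rfl fun i _ => ?_
        simp only [id_eq, eval_mul, eval_C, eval_pow, eval_X]
        rw [neg_pow t]
        ring
    _ ≤ |t| ^ (N + 1) / (1 - |t|) := hsum
    _ ≤ |t| ^ (N + 1) / (1 / 2) := by gcongr; linarith
    _ = 2 * ‖id t ^ (N + 1)‖ := by rw [id, norm_pow, Real.norm_eq_abs]; ring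

lemma hasExpansion_log_one_add_four :
    HasExpansion (𝓝 0) id 4 (fun t => Real.log (1 + t)) (cubicPoly 0 1 (-1 / 2) (1 / 3)) := by
  convert hasExpansion_log_one_add 3
  norm_num [Finset.sum_range_succ, cubicPoly]

lemma hasExpansion_inv_one_add (N : ℕ) :
    HasExpansion (𝓝 0) id N (fun t => (1 + t)⁻¹)
      (∑ i ∈ Finset.range N, C ((-1 : ℝ) ^ i) * X ^ i) := by
  have hone : Tendsto (fun t : ℝ => 1 + t) (𝓝 0) (𝓝 1) := by
    simpa only [add_zero, id_eq] using (tendsto_id (x := 𝓝 (0 : ℝ))).const_add 1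
  have hbdd : (fun t : ℝ => (-1) ^ N * (1 + t)⁻¹) =O[𝓝 0] fun _ => (1 : ℝ) :=
    ((hone.inv₀ one_ne_zero).const_mul _).isBigO_one ℝ
  have hrem := hbdd.mul (isBigO_refl (fun t : ℝ => t ^ N) (𝓝 0))
  simp only [one_mul] at hrem
  refine hrem.congr' ?_ EventuallyEq.rfl
  filter_upwards [hone.eventually_ne one_ne_zero] with t ht
  have hgeom : (∑ i ∈ Finset.range N, (-t) ^ i) * (1 + t) = 1 - (-t) ^ N := by
    simpa only [sub_neg_eq_add] using geom_sum_mul_neg (-t) N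
  simp only [id_eq, eval_finsetSum, eval_mul, eval_C, eval_pow, eval_X, ← neg_pow]
  rw [(eq_mul_inv_iff_mul_eq₀ ht).2 hgeom, neg_pow]
  ring

lemma hasExpansion_inv_one_add_four :
    HasExpansion (𝓝 0) id 4 (fun t => (1 + t)⁻¹) (cubicPoly 1 (-1) 1 (-1)) := by
  convert hasExpansion_inv_one_add 4
  rw [sum_range_four_C_mul_X_pow]
  norm_num

/-- The truncated negative moment `∫ₕ^∞ t⁻ⁿ exp(-t² / 2) dt` of the Gaussian weight; integrating by
parts expresses the one of order `n` through the one of order `n + 2`. -/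
noncomputable def gaussTail (n : ℕ) (h : ℝ) : ℝ :=
  ∫ t in Set.Ioi h, t⁻¹ ^ n * Real.exp (-t ^ 2 / 2)

lemma integrable_exp_neg_sq_div_two : Integrable fun t : ℝ => Real.exp (-t ^ 2 / 2) :=
  (integrable_exp_neg_mul_sq (b := 1 / 2) (by norm_num)).congr
    (.of_forall fun t => by ring_nf)

lemma integral_exp_neg_sq_div_two : ∫ t : ℝ, Real.exp (-t ^ 2 / 2) = √(2 * π) := by
  calc ∫ t : ℝ, Real.exp (-t ^ 2 / 2) = ∫ t : ℝ, Real.exp (-(1 / 2) * t ^ 2) :=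
        integral_congr_ae (.of_forall fun t => by ring_nf)
    _ = √(2 * π) := by rw [integral_gaussian, div_div_eq_mul_div, div_one, mul_comm]

lemma one_sub_stdNormalCDF (h : ℝ) : 1 - stdNormalCDF h = gaussTail 0 h / √(2 * π) := by
  have hsplit := intervalIntegral.integral_Iic_add_Ioi (b := h)
    integrable_exp_neg_sq_div_two.integrableOn integrable_exp_neg_sq_div_two.integrableOn
  rw [integral_exp_neg_sq_div_two] at hsplit
  have hpos : √(2 * π) ≠ 0 := by positivity
  simp only [stdNormalCDF, gaussTail, pow_zero, one_mul]
  rw [integral_div, eq_div_iff hpos, sub_mul, div_mul_cancel₀ _ hpos, one_mul, ← hsplit,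
    add_sub_cancel_left]

lemma stdNormalCDF_nonneg (h : ℝ) : 0 ≤ stdNormalCDF h :=
  integral_nonneg fun _ => by positivity

lemma stdNormalCDF_le_one (h : ℝ) : stdNormalCDF h ≤ 1 := by
  have htail : 0 ≤ gaussTail 0 h := integral_nonneg fun _ => by positivity
  have := one_sub_stdNormalCDF h ▸ div_nonneg htail (Real.sqrt_nonneg (2 * π))
  linarith

section MillsRatio

variable {h : ℝ}

lemma gaussTail_nonneg (hh : 0 ≤ h) (n : ℕ) : 0 ≤ gaussTail n h :=
  setIntegral_nonneg measurableSet_Ioi fun t ht => by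
    have : 0 < t := hh.trans_lt ht
    positivity

lemma integrableOn_gaussTail (hh : 0 < h) (n : ℕ) :
    IntegrableOn (fun t : ℝ => t⁻¹ ^ n * Real.exp (-t ^ 2 / 2)) (Set.Ioi h) := by
  refine integrable_exp_neg_sq_div_two.integrableOn.bdd_mul (c := h⁻¹ ^ n)
    (by fun_prop) ((ae_restrict_mem measurableSet_Ioi).mono fun t ht => ?_)
  have ht0 : 0 < t := hh.trans ht
  rw [norm_pow, norm_inv, Real.norm_of_nonneg ht0.le]
  gcongr
  exact le_of_lt ht

lemma hasDerivAt_neg_inv_pow_mul_exp {t : ℝ} (ht : t ≠ 0) (n : ℕ) :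
    HasDerivAt (fun t : ℝ => -(t⁻¹ ^ (n + 1) * Real.exp (-t ^ 2 / 2)))
      (t⁻¹ ^ n * Real.exp (-t ^ 2 / 2) +
        (n + 1) * (t⁻¹ ^ (n + 2) * Real.exp (-t ^ 2 / 2))) t := by
  have hexp : HasDerivAt (fun t : ℝ => Real.exp (-t ^ 2 / 2))
      (Real.exp (-t ^ 2 / 2) * (-(2 * t) / 2)) t := by
    simpa using ((hasDerivAt_pow 2 t).fun_neg.div_const 2).exp
  refine (((hasDerivAt_inv ht).fun_pow (n + 1)).fun_mul hexp).fun_neg.congr_deriv ?_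
  simp only [Nat.cast_add, Nat.cast_one, Nat.add_sub_cancel, inv_pow]
  field_simp
  ring

lemma tendsto_inv_pow_mul_exp (n : ℕ) :
    Tendsto (fun t : ℝ => -(t⁻¹ ^ (n + 1) * Real.exp (-t ^ 2 / 2))) atTop (𝓝 0) := by
  have hinv : Tendsto (fun t : ℝ => t⁻¹ ^ (n + 1)) atTop (𝓝 0) := by
    simpa using (tendsto_inv_atTop_zero (𝕜 := ℝ)).pow (n + 1)
  refine squeeze_zero_norm' ?_ hinv
  filter_upwards [eventually_gt_atTop 0] with t ht
  rw [norm_neg, Real.norm_of_nonneg (by positivity)]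
  exact mul_le_of_le_one_right (by positivity) (Real.exp_le_one_iff.2 (by linarith [sq_nonneg t]))

lemma gaussTail_add_mul_gaussTail (hh : 0 < h) (n : ℕ) :
    gaussTail n h + (n + 1) * gaussTail (n + 2) h = h⁻¹ ^ (n + 1) * Real.exp (-h ^ 2 / 2) := by
  have hint := integrableOn_gaussTail hh n
  have hint' := (integrableOn_gaussTail hh (n + 2)).const_mul ((n : ℝ) + 1)
  have hparts := integral_Ioi_of_hasDerivAt_of_tendsto'
    (fun t ht => hasDerivAt_neg_inv_pow_mul_exp (hh.trans_le ht).ne' n)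
    (hint.add hint') (tendsto_inv_pow_mul_exp n)
  rwa [integral_add hint hint', integral_const_mul, zero_sub, neg_neg] at hparts

lemma gaussTail_le (hh : 0 < h) (n : ℕ) :
    gaussTail n h ≤ h⁻¹ ^ (n + 1) * Real.exp (-h ^ 2 / 2) := by
  have hnext : 0 ≤ ((n : ℝ) + 1) * gaussTail (n + 2) h :=
    mul_nonneg (by positivity) (gaussTail_nonneg hh.le _)
  linarith [gaussTail_add_mul_gaussTail hh n]

/-- Truncation of the divergent asymptotic series `∑ (-1)ᵏ (2k - 1)‼ Xᵏ` of the normalized Mills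
ratio. The `k = 0` coefficient is `1` because natural subtraction gives `(2 * 0 - 1)‼ = 0‼`. -/
noncomputable def millsPoly (N : ℕ) : ℝ[X] :=
  ∑ k ∈ Finset.range N, C ((-1 : ℝ) ^ k * ((2 * k - 1).doubleFactorial : ℝ)) * X ^ k

lemma millsPoly_four : millsPoly 4 = cubicPoly 1 (-1) 3 (-15) := by
  rw [millsPoly, sum_range_four_C_mul_X_pow]
  norm_num [Nat.doubleFactorial]

lemma gaussTail_zero_eq (hh : 0 < h) (N : ℕ) :
    gaussTail 0 h = h⁻¹ * Real.exp (-h ^ 2 / 2) * (millsPoly N).eval (h ^ 2)⁻¹ +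
      (-1) ^ N * ((2 * N - 1).doubleFactorial : ℝ) * gaussTail (2 * N) h := by
  induction N with
  | zero => simp [millsPoly]
  | succ N ih =>
    have hdf : (2 * (N + 1) - 1).doubleFactorial = (2 * N + 1) * (2 * N - 1).doubleFactorial :=
      Nat.doubleFactorial_add_one (2 * N)
    have hparts := gaussTail_add_mul_gaussTail hh (2 * N)
    have hmills : (millsPoly (N + 1)).eval (h ^ 2)⁻¹ = (millsPoly N).eval (h ^ 2)⁻¹ +
        (-1) ^ N * ((2 * N - 1).doubleFactorial : ℝ) * h⁻¹ ^ (2 * N) := by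
      simp only [millsPoly, Finset.sum_range_succ, eval_add, eval_mul, eval_C, eval_pow, eval_X,
        inv_pow, pow_mul]
    rw [ih, eq_sub_of_add_eq hparts, hmills, hdf, mul_add_one 2 N]
    push_cast
    ring

/-- The reciprocal of the leading term of the Gaussian tail: `1 - Φ(h) ~ 1 / tailScale h`. In these
terms the equation defining `bₙ` reads `n = tailScale bₙ`. -/
noncomputable def tailScale (h : ℝ) : ℝ := √(2 * π) * h * Real.exp (h ^ 2 / 2)

lemma abs_tailScale_mul_sub_le (hh : 0 < h) (N : ℕ) :
    |tailScale h * (1 - stdNormalCDF h) - (millsPoly N).eval (h ^ 2)⁻¹| ≤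
      ((2 * N - 1).doubleFactorial : ℝ) * (h ^ 2)⁻¹ ^ N := by
  have hweight : h * Real.exp (h ^ 2 / 2) * (h⁻¹ * Real.exp (-h ^ 2 / 2)) = 1 := by
    rw [mul_mul_mul_comm, mul_inv_cancel₀ hh.ne', ← Real.exp_add, neg_div, add_neg_cancel,
      Real.exp_zero, one_mul]
  have htail : tailScale h * (1 - stdNormalCDF h) = h * Real.exp (h ^ 2 / 2) * gaussTail 0 h := by
    rw [one_sub_stdNormalCDF, tailScale]
    field_simp
  have hrem : tailScale h * (1 - stdNormalCDF h) - (millsPoly N).eval (h ^ 2)⁻¹ =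
      (-1) ^ N * (((2 * N - 1).doubleFactorial : ℝ) *
        (h * Real.exp (h ^ 2 / 2) * gaussTail (2 * N) h)) := by
    rw [htail, gaussTail_zero_eq hh N]
    linear_combination (millsPoly N).eval (h ^ 2)⁻¹ * hweight
  have hnonneg := gaussTail_nonneg hh.le (2 * N)
  rw [hrem, abs_mul, abs_neg_one_pow, one_mul, abs_of_nonneg (by positivity)]
  gcongr
  calc h * Real.exp (h ^ 2 / 2) * gaussTail (2 * N) h
      ≤ h * Real.exp (h ^ 2 / 2) * (h⁻¹ ^ (2 * N + 1) * Real.exp (-h ^ 2 / 2)) := by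
        gcongr
        exact gaussTail_le hh _
    _ = h * Real.exp (h ^ 2 / 2) * (h⁻¹ * Real.exp (-h ^ 2 / 2)) * h⁻¹ ^ (2 * N) := by ring
    _ = (h ^ 2)⁻¹ ^ N := by rw [hweight, one_mul, pow_mul, inv_pow]

end MillsRatio

lemma hasExpansion_tailScale_mul_tail (N : ℕ) :
    HasExpansion atTop (fun h => (h ^ 2)⁻¹) N (fun h => tailScale h * (1 - stdNormalCDF h))
      (millsPoly N) := by
  refine IsBigO.of_bound ((2 * N - 1).doubleFactorial : ℝ) ?_
  filter_upwards [eventually_gt_atTop 0] with h hh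
  rw [Real.norm_eq_abs, Real.norm_of_nonneg (by positivity)]
  exact abs_tailScale_mul_sub_le hh N

section Level

variable {x b : ℝ}

/-- The square `c x + d` of the level `h`, where `c = 2 - 2 / b ^ 2` and `d = b ^ 2 - 2 / b ^ 2`, as
a function of the real norming parameter `b`. -/
noncomputable def levelSq (x b : ℝ) : ℝ := (2 - 2 / b ^ 2) * x + (b ^ 2 - 2 / b ^ 2)

/-- The polynomial `w` for which the squared level is `b ^ 2 * (1 + w(b⁻²))`. -/
noncomputable def levelPoly (x : ℝ) : ℝ[X] := cubicPoly 0 (2 * x) (-2 * (x + 1)) 0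

lemma levelSq_eq (hb : b ≠ 0) : levelSq x b = b ^ 2 * (1 + (levelPoly x).eval (b ^ 2)⁻¹) := by
  simp only [levelSq, levelPoly, eval_cubicPoly]
  field_simp
  ring

lemma tendsto_inv_sq_atTop : Tendsto (fun b : ℝ => (b ^ 2)⁻¹) atTop (𝓝 0) :=
  tendsto_inv_atTop_zero.comp (tendsto_pow_atTop two_ne_zero)

lemma tendsto_one_add_levelPoly (x : ℝ) :
    Tendsto (fun b : ℝ => 1 + (levelPoly x).eval (b ^ 2)⁻¹) atTop (𝓝 1) := by
  have h := HasExpansion.tendsto tendsto_inv_sq_atTop one_ne_zero (.polynomial_eval (levelPoly x))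
  simpa only [levelPoly, coeff_cubicPoly_zero, add_zero] using h.const_add 1

lemma tendsto_levelSq (x : ℝ) : Tendsto (levelSq x) atTop atTop := by
  refine ((tendsto_pow_atTop two_ne_zero).atTop_mul_pos one_pos
    (tendsto_one_add_levelPoly x)).congr' ?_
  filter_upwards [eventually_ne_atTop 0] with b hb
  exact (levelSq_eq hb).symm

lemma tendsto_sqrt_levelSq (x : ℝ) : Tendsto (fun b => √(levelSq x b)) atTop atTop :=
  tendsto_sqrt_atTop.comp (tendsto_levelSq x)

lemma hasExpansion_inv_levelSq (x : ℝ) :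
    HasExpansion atTop (fun b : ℝ => (b ^ 2)⁻¹) 4 (fun b => (levelSq x b)⁻¹)
      (cubicPoly 0 1 (-2 * x) (4 * x ^ 2 + 2 * x + 2)) := by
  have hinv := hasExpansion_inv_one_add_four.comp_cubicPoly tendsto_inv_sq_atTop
    (.polynomial_eval (levelPoly x))
  have hprod := (HasExpansion.const_mul_gauge 1).mul_cubicPoly tendsto_inv_sq_atTop hinv
  have hfactored : HasExpansion atTop (fun b : ℝ => (b ^ 2)⁻¹) 4
      (fun b => (b ^ 2)⁻¹ * (1 + (levelPoly x).eval (b ^ 2)⁻¹)⁻¹)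
      (cubicPoly 0 1 (-2 * x) (4 * x ^ 2 + 2 * x + 2)) := by
    convert hprod using 2 <;> ring
  refine hfactored.congr' ?_
  filter_upwards [eventually_ne_atTop 0] with b hb
  rw [levelSq_eq hb, mul_inv]

/-- The exponent `v` in `tailScale b = exp(-x + v) * tailScale h`, where `h` is the level. -/
noncomputable def scaleExponent (x b : ℝ) : ℝ :=
  (x + 1) * (b ^ 2)⁻¹ - Real.log (1 + (levelPoly x).eval (b ^ 2)⁻¹) / 2

lemma tailScale_eq (hb : 0 < b) (hpos : 0 < 1 + (levelPoly x).eval (b ^ 2)⁻¹) :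
    tailScale b =
      Real.exp (-x) * Real.exp (scaleExponent x b) * tailScale (√(levelSq x b)) := by
  set r := 1 + (levelPoly x).eval (b ^ 2)⁻¹ with hr
  have hlevel : levelSq x b = b ^ 2 * r := levelSq_eq hb.ne'
  have hsqrt : √(levelSq x b) = b * √r := by
    rw [hlevel, Real.sqrt_mul (sq_nonneg b), Real.sqrt_sq hb.le]
  have hsq : √(levelSq x b) ^ 2 = levelSq x b :=
    Real.sq_sqrt (hlevel ▸ by positivity)
  have hroot : Real.exp (-(Real.log r / 2)) * √r = 1 := by
    rw [Real.exp_neg, ← Real.log_sqrt hpos.le, Real.exp_log (Real.sqrt_pos.2 hpos),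
      inv_mul_cancel₀ (Real.sqrt_pos.2 hpos).ne']
  have hexp : Real.exp (-x) * Real.exp ((x + 1) * (b ^ 2)⁻¹) * Real.exp (levelSq x b / 2) =
      Real.exp (b ^ 2 / 2) := by
    rw [← Real.exp_add, ← Real.exp_add, levelSq]
    congr 1
    ring
  rw [scaleExponent, sub_eq_add_neg, Real.exp_add, tailScale, tailScale, hsq, hsqrt, ← hexp, ← hr]
  linear_combination (-√(2 * π) * b * Real.exp (-x) * Real.exp ((x + 1) * (b ^ 2)⁻¹) *
    Real.exp (levelSq x b / 2)) * hroot

lemma hasExpansion_scaleExponent (x : ℝ) :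
    HasExpansion atTop (fun b : ℝ => (b ^ 2)⁻¹) 4 (scaleExponent x)
      (cubicPoly 0 1 (x ^ 2 + x + 1) (-(2 * x ^ 2 + 2 * x + 4 / 3 * x ^ 3))) := by
  have hlog := hasExpansion_log_one_add_four.comp_cubicPoly tendsto_inv_sq_atTop
    (.polynomial_eval (levelPoly x))
  have hsum := (HasExpansion.const_mul_gauge (x + 1)).add_cubicPoly
    (hlog.const_mul_cubicPoly (-1 / 2))
  convert hsum using 2
  · rw [scaleExponent]
    ring
  all_goals ring

lemma hasExpansion_exp_scaleExponent (x : ℝ) :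
    HasExpansion atTop (fun b : ℝ => (b ^ 2)⁻¹) 4 (fun b => Real.exp (scaleExponent x b))
      (cubicPoly 1 1 (x ^ 2 + x + 3 / 2) (7 / 6 - x - x ^ 2 - 4 / 3 * x ^ 3)) := by
  convert hasExpansion_exp_four.comp_cubicPoly tendsto_inv_sq_atTop
    (hasExpansion_scaleExponent x) using 2 <;> ring

lemma hasExpansion_mills_level (x : ℝ) :
    HasExpansion atTop (fun b : ℝ => (b ^ 2)⁻¹) 4
      (fun b => tailScale (√(levelSq x b)) * (1 - stdNormalCDF (√(levelSq x b))))
      (cubicPoly 1 (-1) (2 * x + 3) (-(4 * x ^ 2 + 14 * x + 17))) := by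
  have hgauge := (hasExpansion_inv_levelSq x).congr' (g := fun b => (√(levelSq x b) ^ 2)⁻¹) <|
    ((tendsto_levelSq x).eventually_ge_atTop 0).mono fun b hb => by simp only [Real.sq_sqrt hb]
  have hmills := (hasExpansion_tailScale_mul_tail 4).comp_tendsto (tendsto_sqrt_levelSq x)
  rw [millsPoly_four] at hmills
  convert hmills.trans_cubicPoly tendsto_inv_sq_atTop hgauge using 2 <;> ring

/-- The expansion of `n * (1 - Φ(hₙ)) / exp(-x)` in powers of `bₙ⁻²`. -/
noncomputable def exceedancePoly (x : ℝ) : ℝ[X] :=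
  cubicPoly 1 0 (7 / 2 + 3 * x + x ^ 2) (-(43 / 3 + 14 * x + 6 * x ^ 2 + 4 / 3 * x ^ 3))

lemma hasExpansion_tailScale_mul_tail_level (x : ℝ) :
    HasExpansion atTop (fun b : ℝ => (b ^ 2)⁻¹) 4
      (fun b => tailScale b * (1 - stdNormalCDF (√(levelSq x b))))
      (C (Real.exp (-x)) * exceedancePoly x) := by
  have hprod := (hasExpansion_exp_scaleExponent x).mul_cubicPoly tendsto_inv_sq_atTop
    (hasExpansion_mills_level x)
  have hratio : HasExpansion atTop (fun b : ℝ => (b ^ 2)⁻¹) 4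
      (fun b => Real.exp (scaleExponent x b) *
        (tailScale (√(levelSq x b)) * (1 - stdNormalCDF (√(levelSq x b))))) (exceedancePoly x) := by
    rw [exceedancePoly]
    convert hprod using 2 <;> ring
  refine (hratio.const_mul (Real.exp (-x))).congr' ?_
  filter_upwards [eventually_gt_atTop 0,
    (tendsto_one_add_levelPoly x).eventually_const_lt one_pos] with b hb hpos
  rw [tailScale_eq hb hpos]
  ring

/-- The third-order expansion of `νₙ / Λ(x)` in powers of `bₙ⁻²`. -/
noncomputable def nuPoly (x : ℝ) : ℝ[X] :=
  cubicPoly 1 0 (-(Real.exp (-x) * (7 / 2 + 3 * x + x ^ 2)))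
    (Real.exp (-x) * (43 / 3 + 14 * x + 6 * x ^ 2 + 4 / 3 * x ^ 3))

lemma hasExpansion_exp_neg_tailScale_mul_tail_level (x : ℝ) :
    HasExpansion atTop (fun b : ℝ => (b ^ 2)⁻¹) 4
      (fun b => Real.exp (-(tailScale b * (1 - stdNormalCDF (√(levelSq x b))))))
      (C (gumbel x) * nuPoly x) := by
  have htail := hasExpansion_tailScale_mul_tail_level x
  rw [exceedancePoly, C_mul_cubicPoly] at htail
  have hdiff : HasExpansion atTop (fun b : ℝ => (b ^ 2)⁻¹) 4
      (fun b => Real.exp (-x) + -1 * (tailScale b * (1 - stdNormalCDF (√(levelSq x b)))))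
      (cubicPoly 0 0 (-(Real.exp (-x) * (7 / 2 + 3 * x + x ^ 2)))
        (Real.exp (-x) * (43 / 3 + 14 * x + 6 * x ^ 2 + 4 / 3 * x ^ 3))) := by
    convert (HasExpansion.const (Real.exp (-x))).add_cubicPoly (htail.const_mul_cubicPoly (-1))
      using 2 <;> ring
  have hexp : HasExpansion atTop (fun b : ℝ => (b ^ 2)⁻¹) 4 (fun b => Real.exp
      (Real.exp (-x) + -1 * (tailScale b * (1 - stdNormalCDF (√(levelSq x b)))))) (nuPoly x) := by
    rw [nuPoly]
    convert hasExpansion_exp_four.comp_cubicPoly tendsto_inv_sq_atTop hdiff using 2 <;> ring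
  refine (hexp.const_mul (gumbel x)).congr' (.of_forall fun b => ?_)
  simp only [gumbel, ← Real.exp_add]
  congr 1
  ring

end Level

section Powers

variable {p : ℝ}

lemma abs_one_sub_pow_sub_exp_le (hp₀ : 0 ≤ p) (hp₁ : p ≤ 1) (m : ℕ) :
    |(1 - p) ^ m - Real.exp (-(m * p))| ≤ m * p ^ 2 := by
  have hlinear : |1 - p - Real.exp (-p)| ≤ p ^ 2 := by
    have h := Real.abs_exp_sub_one_sub_id_le (x := -p) (by rwa [abs_neg, abs_of_nonneg hp₀])
    rwa [neg_sq, abs_sub_comm, sub_sub_eq_add_sub, neg_add_eq_sub] at h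
  have hmax : max |1 - p| |Real.exp (-p)| ≤ 1 := by
    rw [abs_of_nonneg (sub_nonneg.2 hp₁), Real.abs_exp]
    exact max_le (by linarith) (Real.exp_le_one_iff.2 (by linarith))
  calc |(1 - p) ^ m - Real.exp (-(m * p))|
      = |(1 - p) ^ m - Real.exp (-p) ^ m| := by rw [← Real.exp_nat_mul, mul_neg]
    _ ≤ |1 - p - Real.exp (-p)| * m * max |1 - p| |Real.exp (-p)| ^ (m - 1) :=
        abs_pow_sub_pow_le _ _ _
    _ ≤ p ^ 2 * m * 1 := by
        gcongr
        exact pow_le_one₀ (le_max_of_le_left (abs_nonneg _)) hmax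
    _ = m * p ^ 2 := by ring

lemma abs_exp_neg_mul_sub_exp_neg_succ_mul_le (hp₀ : 0 ≤ p) (m : ℕ) :
    |Real.exp (-(m * p)) - Real.exp (-((m + 1) * p))| ≤ p := by
  have hstep : Real.exp (-(m * p)) - Real.exp (-((m + 1) * p)) =
      Real.exp (-(m * p)) * (1 - Real.exp (-p)) := by
    rw [mul_one_sub, ← Real.exp_add]
    ring_nf
  have hexp : Real.exp (-p) ≤ 1 := Real.exp_le_one_iff.2 (by linarith)
  rw [hstep, abs_of_nonneg (mul_nonneg (Real.exp_pos _).le (sub_nonneg.2 hexp))]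
  calc Real.exp (-(m * p)) * (1 - Real.exp (-p)) ≤ 1 * (1 - Real.exp (-p)) := by
        gcongr
        exact Real.exp_le_one_iff.2 (neg_nonpos.2 (by positivity))
    _ ≤ p := by linarith [Real.one_sub_le_exp_neg p]

lemma abs_one_sub_pow_sub_pow_sub_exp_le (hp₀ : 0 ≤ p) (hp₁ : p ≤ 1) {n : ℕ} (hn : 2 ≤ n) :
    |(1 - p) ^ (n - 1) - p ^ (n - 1) - Real.exp (-(n * p))| ≤
      ((n * p) ^ 2 + 2 * (n * p)) * (n : ℝ)⁻¹ := by
  obtain ⟨m, rfl⟩ : ∃ m, n = m + 1 := ⟨n - 1, by omega⟩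
  rw [Nat.add_sub_cancel, Nat.cast_add_one]
  have hpow := abs_one_sub_pow_sub_exp_le hp₀ hp₁ m
  have hexp := abs_exp_neg_mul_sub_exp_neg_succ_mul_le hp₀ m
  have hsmall : |p ^ m| ≤ p := by
    rw [abs_of_nonneg (pow_nonneg hp₀ m)]
    exact pow_le_of_le_one hp₀ hp₁ (by omega)
  have hm : (m : ℝ) + 1 ≠ 0 := by positivity
  calc |(1 - p) ^ m - p ^ m - Real.exp (-((m + 1) * p))|
      = |((1 - p) ^ m - Real.exp (-(m * p))) +
          (Real.exp (-(m * p)) - Real.exp (-((m + 1) * p))) - p ^ m| := by ring_nf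
    _ ≤ m * p ^ 2 + p + p :=
        (abs_sub _ _).trans (add_le_add ((abs_add_le _ _).trans (add_le_add hpow hexp)) hsmall)
    _ ≤ (m + 1) * p ^ 2 + 2 * p := by linarith [sq_nonneg p]
    _ = (((m + 1) * p) ^ 2 + 2 * ((m + 1) * p)) * ((m : ℝ) + 1)⁻¹ := by field_simp

end Powers

lemma eq_tailScale_of_sq_eq {b y : ℝ} (hb : 0 ≤ b) (hy : 0 ≤ y)
    (h : 2 * π * b ^ 2 * Real.exp (b ^ 2) = y ^ 2) : y = tailScale b := by
  have hsq : tailScale b ^ 2 = y ^ 2 := by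
    rw [← h, tailScale, mul_pow, mul_pow, Real.sq_sqrt (by positivity), ← Real.exp_nat_mul]
    ring_nf
  refine ((pow_left_inj₀ ?_ hy two_ne_zero).1 hsq).symm
  unfold tailScale
  positivity

lemma tailScale_le_tailScale {b₁ b₂ : ℝ} (hb₁ : 0 ≤ b₁) (h : b₁ ≤ b₂) :
    tailScale b₁ ≤ tailScale b₂ := by
  have hb₂ : 0 ≤ b₂ := hb₁.trans h
  unfold tailScale
  gcongr

lemma inv_tailScale_isBigO (N : ℕ) :
    (fun b => (tailScale b)⁻¹) =O[atTop] fun b => (b ^ 2)⁻¹ ^ N := by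
  have hexp : (fun b : ℝ => Real.exp (-(1 / 2) * b ^ 2)) =O[atTop] fun b => (b ^ 2)⁻¹ ^ N :=
    ((isLittleO_exp_neg_mul_rpow_atTop one_half_pos (-(N : ℝ))).isBigO.comp_tendsto
      (tendsto_pow_atTop two_ne_zero)).congr_right fun b => by
        simp only [Function.comp_apply]
        rw [Real.rpow_neg (sq_nonneg b), Real.rpow_natCast, inv_pow]
  refine (IsBigO.of_bound 1 ?_).trans hexp
  filter_upwards [eventually_ge_atTop 1] with b hb
  have hone : 1 ≤ √(2 * π) * b :=
    one_le_mul_of_one_le_of_one_le (Real.one_le_sqrt.2 (by linarith [Real.pi_gt_three])) hb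
  rw [tailScale, mul_inv, norm_mul, ← Real.exp_neg]
  gcongr
  · rw [norm_inv, Real.norm_of_nonneg (by positivity)]
    exact inv_le_one_of_one_le₀ hone
  · ring_nf
    rfl

section NormingSequence

variable {b : ℕ → ℝ}

lemma tendsto_atTop_of_eq_tailScale
    (hb : ∀ᶠ n : ℕ in atTop, 0 < b n ∧ (n : ℝ) = tailScale (b n)) : Tendsto b atTop atTop := by
  rw [tendsto_atTop]
  intro K
  filter_upwards [hb, tendsto_natCast_atTop_atTop.eventually_gt_atTop (tailScale K)]
    with n ⟨hpos, hn⟩ hlarge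
  by_contra! hlt
  exact (hlarge.trans_eq hn).not_ge (tailScale_le_tailScale hpos.le hlt.le)

lemma hasExpansion_pow_sub_pow (hb : ∀ᶠ n : ℕ in atTop, 0 < b n ∧ (n : ℝ) = tailScale (b n))
    (x : ℝ) :
    HasExpansion atTop (fun n => (b n ^ 2)⁻¹) 4
      (fun n => stdNormalCDF (√(levelSq x (b n))) ^ (n - 1) -
        (1 - stdNormalCDF (√(levelSq x (b n)))) ^ (n - 1)) (C (gumbel x) * nuPoly x) := by
  have hb_top : Tendsto b atTop atTop := tendsto_atTop_of_eq_tailScale hb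
  set u : ℕ → ℝ := fun n => tailScale (b n) * (1 - stdNormalCDF (√(levelSq x (b n))))
  have hu_one : (fun n => u n ^ 2 + 2 * u n) =O[atTop] fun _ => (1 : ℝ) := by
    have hu_lim : Tendsto u atTop _ := ((hasExpansion_tailScale_mul_tail_level x).tendsto
      tendsto_inv_sq_atTop four_ne_zero).comp hb_top
    exact ((hu_lim.pow 2).add (hu_lim.const_mul 2)).isBigO_one ℝ
  have hrem := hu_one.mul ((inv_tailScale_isBigO 4).comp_tendsto hb_top)
  simp only [one_mul] at hrem
  refine ((hasExpansion_exp_neg_tailScale_mul_tail_level x).comp_tendsto hb_top).of_sub_isBigO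
    (.trans (.of_bound 1 ?_) hrem)
  filter_upwards [hb, eventually_ge_atTop 2] with n ⟨_, hn⟩ hn₂
  have hpow := abs_one_sub_pow_sub_pow_sub_exp_le
    (sub_nonneg.2 (stdNormalCDF_le_one (√(levelSq x (b n)))))
    (sub_le_self _ (stdNormalCDF_nonneg _)) hn₂
  rw [sub_sub_cancel, hn] at hpow
  rw [one_mul]
  exact hpow.trans (le_abs_self _)

end NormingSequence

end PoweredExtremes

open PoweredExtremes

/-- Lemma 3.2(2): With `b_n` the unique positive solution of
`2π b_n² exp(b_n²) = n²`, `c_n = 2 − 2b_n^{−2}`, `d_n = b_n² − 2b_n^{−2}`,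
`h_n = (c_n x + d_n)^{1/2}` and `ν_n = Φ(h_n)^{n−1} − (1 − Φ(h_n))^{n−1}`:
`ν_n = Λ(x)(1 − e^{−x} b_n^{−4}(7/2 + 3x + x²)
  + e^{−x} b_n^{−6}(43/3 + 14x + 6x² + (4/3)x³) + O(b_n^{−8}))`. -/
theorem powered_extremes_nu_expansion_t_eq_two
    (b : ℕ → ℝ)
    (hb : ∀ n : ℕ, 1 ≤ n → 0 < b n ∧
      2 * Real.pi * (b n) ^ 2 * Real.exp ((b n) ^ 2) = (n : ℝ) ^ 2)
    (x : ℝ)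
    (c d h ν : ℕ → ℝ)
    (hc : ∀ n : ℕ, c n = 2 - 2 / (b n) ^ 2)
    (hd : ∀ n : ℕ, d n = (b n) ^ 2 - 2 / (b n) ^ 2)
    (hh : ∀ n : ℕ, h n = (c n * x + d n) ^ ((1 : ℝ) / 2))
    (hν : ∀ n : ℕ, ν n = stdNormalCDF (h n) ^ (n - 1) -
      (1 - stdNormalCDF (h n)) ^ (n - 1)) :
    ∃ C > (0 : ℝ), ∃ N : ℕ, ∀ n : ℕ, N ≤ n →
      0 < c n * x + d n ∧
      |ν n -
        gumbel x * (1 - Real.exp (-x) / (b n) ^ 4 * (7 / 2 + 3 * x + x ^ 2) +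
          Real.exp (-x) / (b n) ^ 6 *
            (43 / 3 + 14 * x + 6 * x ^ 2 + 4 / 3 * x ^ 3))|
      ≤ C / (b n) ^ 8 := by
  have hscale : ∀ᶠ n : ℕ in atTop, 0 < b n ∧ (n : ℝ) = tailScale (b n) := by
    filter_upwards [eventually_ge_atTop 1] with n hn
    exact ⟨(hb n hn).1, eq_tailScale_of_sq_eq (hb n hn).1.le n.cast_nonneg (hb n hn).2⟩
  have hlevel : ∀ n, c n * x + d n = levelSq x (b n) := fun n => by rw [hc, hd, levelSq]
  have hlevel_pos : ∀ᶠ n in atTop, 0 < levelSq x (b n) :=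
    ((tendsto_levelSq x).comp (tendsto_atTop_of_eq_tailScale hscale)).eventually_gt_atTop 0
  have hν_exp : HasExpansion atTop (fun n => (b n ^ 2)⁻¹) 4 ν (C (gumbel x) * nuPoly x) :=
    (hasExpansion_pow_sub_pow hscale x).congr' <| .of_forall fun n => by
      simp only [hν, hh, hlevel, Real.sqrt_eq_rpow]
  obtain ⟨K, hK, hbound⟩ := hν_exp.exists_pos
  obtain ⟨N, hN⟩ := eventually_atTop.1 (hbound.bound.and hlevel_pos)
  refine ⟨K, hK, N, fun n hn => ⟨hlevel n ▸ (hN n hn).2, ?_⟩⟩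
  have herror := (hN n hn).1
  rw [Real.norm_eq_abs, Real.norm_of_nonneg (by positivity)] at herror
  convert herror using 1
  · rw [eval_mul, eval_C, nuPoly, eval_cubicPoly]
    ring_nf
  · ring
end
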